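/- arXiv:2503.23380 — 3 statements merged into one kernel-verified Lean document; each statement's English description precedes it below -/
import Mathlib

section
/- There exist a function f : [0,1]^2 → ℝ belonging to C^{1,α}([0,1]^2) for every α ∈ (0,1), and a compact set K ⊂ [0,1]^2 with two-dimensional Lebesgue measure L²(K) = r > 0, such that ∇f(x) = 0 for every x ∈ K and the pushforward measure satisfies f_#(𝟙_K L²) = r · 𝟙_{[0,1]} L¹, i.e. the pushforward by f of Lebesgue measure restricted to K equals r times one-dimensional Lebesgue measure restricted to [0,1]. -/
open MeasureTheory Set

noncomputable section

/-- The unit square `[0,1]²` in the Euclidean plane. -/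
def unitSquare : Set (EuclideanSpace ℝ (Fin 2)) := {x | ∀ i, x i ∈ Set.Icc (0:ℝ) 1}

/-- `f` is of class `C^{1,α}` on `[0,1]²`: continuously differentiable with gradient
Hölder continuous of exponent `α`. -/
def IsC1Holder (f : EuclideanSpace ℝ (Fin 2) → ℝ) (α : ℝ) : Prop :=
  DifferentiableOn ℝ f unitSquare ∧
  ContinuousOn (fderivWithin ℝ f unitSquare) unitSquare ∧
  ∃ C : ℝ, ∀ x ∈ unitSquare, ∀ y ∈ unitSquare,
    ‖fderivWithin ℝ f unitSquare x - fderivWithin ℝ f unitSquare y‖ ≤ C * dist x y ^ α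


/-- jump sum -/
def jumpSum {ι : Type*} (q w : ι → ℝ) (t : ℝ) : ℝ := ∑' i, if q i < t then w i else 0

lemma jumpSum_summable {ι : Type*} {q w : ι → ℝ} (hw : ∀ i, 0 ≤ w i) (hs : Summable w) (t : ℝ) :
    Summable (fun i => if q i < t then w i else 0) := by
  refine Summable.of_nonneg_of_le (fun i => ?_) (fun i => ?_) hs <;> split_ifs <;> simp [hw]

lemma jumpSum_mono {ι : Type*} {q w : ι → ℝ} (hw : ∀ i, 0 ≤ w i) (hs : Summable w) :
    Monotone (jumpSum q w) := by
  intro a b hab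
  refine Summable.tsum_le_tsum (fun i => ?_) (jumpSum_summable hw hs a) (jumpSum_summable hw hs b)
  split_ifs with h1 h2 <;> first | exact hw i | exact le_rfl | linarith

lemma jumpSum_jump {ι : Type*} {q w : ι → ℝ} (hw : ∀ i, 0 ≤ w i) (hs : Summable w) (i : ι)
    {t : ℝ} (h : q i < t) : jumpSum q w (q i) + w i ≤ jumpSum q w t := by
  classical
  have h1 : HasSum (fun j => (if q j < q i then w j else 0) + (if j = i then w i else 0))
      (jumpSum q w (q i) + w i) :=
    (jumpSum_summable hw hs (q i)).hasSum.add (hasSum_ite_eq i (w i))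
  refine hasSum_le (fun j => ?_) h1 (jumpSum_summable hw hs t).hasSum
  by_cases hj : j = i
  · subst hj; simp [h]
  · simp only [hj, if_false, add_zero]
    split_ifs with h1 h2 <;> first | exact hw j | exact le_rfl | linarith

lemma jumpSum_zero {ι : Type*} {q w : ι → ℝ} (hq : ∀ i, 0 < q i) : jumpSum q w 0 = 0 := by
  have : ∀ i, ¬ q i < 0 := fun i => not_lt.2 (hq i).le
  simp [jumpSum, this]

lemma jumpSum_one {ι : Type*} {q w : ι → ℝ} (hq : ∀ i, q i < 1) : jumpSum q w 1 = ∑' i, w i := by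
  simp [jumpSum, hq]

/-- eta bump -/
def etaB (y : ℝ) : ℝ := max 0 (6 * y * (1 - y))

lemma etaB_nonneg (y : ℝ) : 0 ≤ etaB y := le_max_left _ _

lemma etaB_cont : Continuous etaB := by unfold etaB; fun_prop

lemma etaB_zero {y : ℝ} (h : y ∉ Ioo (0:ℝ) 1) : etaB y = 0 := by
  unfold etaB
  apply max_eq_left
  by_cases h1 : 0 < y
  · have : 1 ≤ y := by by_contra h2; exact h ⟨h1, not_le.1 h2⟩
    nlinarith
  · nlinarith

lemma etaB_le (y : ℝ) : etaB y ≤ 2 := by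
  unfold etaB
  apply max_le (by norm_num)
  nlinarith [sq_nonneg (y - 1/2)]

lemma etaB_sub_le (x y : ℝ) : etaB x - etaB y ≤ 6 * |x - y| := by
  by_cases hx : x ∈ Ioo (0:ℝ) 1
  · obtain ⟨h0, h1⟩ := hx
    have hxe : etaB x = 6 * x * (1 - x) := max_eq_right (by
      have := mul_pos h0 (sub_pos.2 h1); nlinarith)
    have hy : 6 * y * (1 - y) ≤ etaB y := le_max_right _ _
    have hy0 := etaB_nonneg y
    rw [hxe]
    by_cases hy1 : y < 0
    · rw [abs_of_pos (by linarith)]; nlinarith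
    by_cases hy2 : 1 < y
    · rw [abs_of_neg (by linarith)]; nlinarith
    push Not at hy1 hy2
    rcases le_total x y with h | h
    · rw [abs_of_nonpos (by linarith)]; nlinarith
    · rw [abs_of_nonneg (by linarith)]; nlinarith
  · rw [etaB_zero hx]
    have := etaB_nonneg y
    have := abs_nonneg (x - y)
    linarith

lemma etaB_holder {α : ℝ} (h0 : 0 < α) (h1 : α < 1) (x y : ℝ) :
    etaB x - etaB y ≤ 6 * |x - y| ^ α := by
  rcases le_total |x - y| 1 with h | h
  · refine (etaB_sub_le x y).trans ?_
    have := Real.rpow_le_rpow_of_exponent_ge_of_imp (abs_nonneg (x-y)) h h1.le (by intro _ h; norm_num at h)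
    rw [Real.rpow_one] at this
    linarith
  · have := Real.one_le_rpow h h0.le
    have := etaB_le x
    have := etaB_nonneg y
    linarith

lemma etaB_integral : ∫ y in (0:ℝ)..1, etaB y = 1 := by
  have : ∫ y in (0:ℝ)..1, etaB y = ∫ y in (0:ℝ)..1, (6 * y - 6 * y ^ 2) := by
    apply intervalIntegral.integral_congr
    intro y hy
    rw [uIcc_of_le zero_le_one] at hy
    simp only [etaB]
    rw [max_eq_right (by have := mul_nonneg hy.1 (sub_nonneg.2 hy.2); nlinarith)]
    ring
  rw [this, intervalIntegral.integral_sub (by apply Continuous.intervalIntegrable; fun_prop)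
    (by apply Continuous.intervalIntegrable; fun_prop)]
  rw [intervalIntegral.integral_const_mul, intervalIntegral.integral_const_mul, integral_id,
    integral_pow]
  norm_num

/-- bump on the gap `(a, a+w)` of mass `J` -/
def bump (a w J x : ℝ) : ℝ := J / w * etaB ((x - a) / w)

lemma bump_nonneg {a w J : ℝ} (hw : 0 < w) (hJ : 0 ≤ J) (x : ℝ) : 0 ≤ bump a w J x :=
  mul_nonneg (div_nonneg hJ hw.le) (etaB_nonneg _)

lemma bump_cont (a w J : ℝ) : Continuous (bump a w J) := by
  unfold bump
  exact continuous_const.mul (etaB_cont.comp (by fun_prop))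

lemma bump_zero {a w J x : ℝ} (hw : 0 < w) (h : x ∉ Ioo a (a + w)) : bump a w J x = 0 := by
  unfold bump
  rw [etaB_zero, mul_zero]
  rintro ⟨h1, h2⟩
  rw [div_lt_one hw] at h2
  rw [div_pos_iff_of_pos_right hw] at h1
  exact h ⟨by linarith, by linarith⟩

lemma bump_holder {a w J H α : ℝ} (hw : 0 < w) (hJ : 0 ≤ J) (h0 : 0 < α) (h1 : α < 1)
    (hH : J ≤ H * w ^ (1 + α)) (x y : ℝ) :
    bump a w J x - bump a w J y ≤ 6 * H * |x - y| ^ α := by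
  unfold bump
  rw [← mul_sub]
  have h := etaB_holder h0 h1 ((x - a) / w) ((y - a) / w)
  have e : (x - a) / w - (y - a) / w = (x - y) / w := by ring
  rw [e, abs_div, abs_of_pos hw, Real.div_rpow (abs_nonneg _) hw.le] at h
  calc J / w * _ ≤ J / w * (6 * (|x - y| ^ α / w ^ α)) :=
        mul_le_mul_of_nonneg_left h (div_nonneg hJ hw.le)
    _ = 6 * (J / w ^ (1 + α)) * |x - y| ^ α := by
        rw [Real.rpow_add hw, Real.rpow_one]; field_simp
    _ ≤ _ := by
        gcongr
        rw [div_le_iff₀ (by positivity)]; exact hH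

lemma bump_integral {a w J : ℝ} (hw : 0 < w) : ∫ x in a..(a + w), bump a w J x = J := by
  unfold bump
  rw [intervalIntegral.integral_const_mul]
  have : ∀ x : ℝ, (x - a) / w = x / w - a / w := fun x => by ring
  simp_rw [this]
  rw [intervalIntegral.integral_comp_div_sub (f := etaB) hw.ne']
  have e2 : (a + w) / w - a / w = 1 := by field_simp; ring
  rw [sub_self, e2, etaB_integral]
  simp; field_simp

lemma bump_integrable {a w J : ℝ} (hw : 0 < w) : Integrable (bump a w J) := by
  apply (bump_cont a w J).integrable_of_hasCompactSupport
  refine HasCompactSupport.intro (isCompact_Icc (a := a) (b := a + w)) fun x hx => ?_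
  exact bump_zero hw fun h => hx (Ioo_subset_Icc_self h)

lemma bump_setIntegral {a w J s : ℝ} (hw : 0 < w) (ha : 0 ≤ a) (h : s ≤ a ∨ a + w ≤ s) :
    ∫ x in Ioc 0 s, bump a w J x = if a < s then J else 0 := by
  rcases h with h | h
  · rw [if_neg (not_lt.2 h)]
    apply setIntegral_eq_zero_of_forall_eq_zero
    intro x hx
    exact bump_zero hw fun h' => by linarith [hx.2, h'.1]
  · rw [if_pos (by linarith)]
    rw [setIntegral_eq_of_subset_of_forall_sdiff_eq_zero (s := Ioc a (a+w)) measurableSet_Ioc]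
    · rw [← intervalIntegral.integral_of_le (by linarith), bump_integral hw]
    · exact Ioc_subset_Ioc ha h
    · intro x hx
      exact bump_zero hw fun h' => hx.2 (Ioo_subset_Ioc_self h')

lemma cantor_construction {ι : Type*} [Countable ι] (q w J : ι → ℝ) (hqi : Function.Injective q)
    (hq0 : ∀ i, 0 < q i) (hq1 : ∀ i, q i < 1) (hw : ∀ i, 0 < w i) (hws : Summable w)
    (hw1 : ∑' i, w i < 1) (hJ : ∀ i, 0 ≤ J i) (hJs : Summable J)
    (hH : ∀ α ∈ Ioo (0:ℝ) 1, ∃ H, ∀ i, J i ≤ H * w i ^ (1 + α)) :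
    ∃ (g ψ : ℝ → ℝ) (C : Set ℝ) (c : ℝ), 0 < c ∧ IsCompact C ∧ C ⊆ Icc 0 1 ∧
      volume C = ENNReal.ofReal c ∧ (∀ x, HasDerivAt g (ψ x) x) ∧ (∀ x ∈ C, ψ x = 0) ∧
      (∀ α ∈ Ioo (0:ℝ) 1, ∃ H, 0 ≤ H ∧ ∀ x y, |ψ x - ψ y| ≤ H * |x - y| ^ α) ∧
      Measure.map g (volume.restrict C) =
        ENNReal.ofReal c • Measure.map (jumpSum q J) (volume.restrict (Icc 0 1)) := by
  set c : ℝ := 1 - ∑' i, w i with hc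
  have hc0 : 0 < c := by linarith
  have hw' : ∀ i, 0 ≤ w i := fun i => (hw i).le
  set s : ℝ → ℝ := fun t => c * t + jumpSum q w t with hs
  have hs_exp : ∀ a b, a ≤ b → c * (b - a) ≤ s b - s a := by
    intro a b hab
    have := jumpSum_mono (q := q) hw' hws hab
    simp only [hs]; linarith
  have hs_mono : Monotone s := by
    intro a b hab
    have := hs_exp a b hab
    have := mul_nonneg hc0.le (sub_nonneg.2 hab)
    linarith
  have hs_jump : ∀ i t, q i < t → s (q i) + w i < s t := by
    intro i t h
    have h1 := jumpSum_jump hw' hws i h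
    have h2 := mul_lt_mul_of_pos_left h hc0
    simp only [hs]; linarith
  have hs0 : s 0 = 0 := by simp [hs, jumpSum_zero hq0]
  have hs1 : s 1 = 1 := by simp only [hs, jumpSum_one hq1, hc]; ring
  set a : ι → ℝ := fun i => s (q i) with ha
  set gap : ι → Set ℝ := fun i => Ioo (a i) (a i + w i) with hgap
  have ha0 : ∀ i, 0 ≤ a i := fun i => by rw [← hs0]; exact hs_mono (hq0 i).le
  have ha1 : ∀ i, a i + w i ≤ 1 := fun i => by rw [← hs1]; exact (hs_jump i 1 (hq1 i)).le
  have hdisj : Pairwise (Function.onFun Disjoint gap) := by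
    intro i j hij
    rw [Function.onFun, Set.disjoint_left]
    intro x hx hy
    rcases lt_trichotomy (q i) (q j) with h | h | h
    · have := hs_jump i _ h
      have h1 := hx.2; have h2 := hy.1
      simp only [ha] at h1 h2; linarith
    · exact hij (hqi h)
    · have := hs_jump j _ h
      have h1 := hy.2; have h2 := hx.1
      simp only [ha] at h1 h2; linarith
  set C : Set ℝ := Icc 0 1 \ ⋃ i, gap i with hC
  have hCcl : IsClosed C := by
    rw [hC, sdiff_eq]
    exact isClosed_Icc.inter (isOpen_iUnion fun i => isOpen_Ioo).isClosed_compl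
  have hCsub : C ⊆ Icc 0 1 := sdiff_subset
  have hCcomp : IsCompact C := isCompact_Icc.of_isClosed_subset hCcl hCsub
  have hvol : volume C = ENNReal.ofReal c := by
    have h1 : volume (⋃ i, gap i) = ENNReal.ofReal (∑' i, w i) := by
      rw [measure_iUnion hdisj fun i => measurableSet_Ioo, ENNReal.ofReal_tsum_of_nonneg hw' hws]
      simp [hgap]
    rw [hC, measure_sdiff (iUnion_subset fun i => ?_)
      (MeasurableSet.iUnion fun i => measurableSet_Ioo).nullMeasurableSet (by rw [h1]; simp), h1,
      Real.volume_Icc, ← ENNReal.ofReal_sub _ (tsum_nonneg hw')]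
    · simp [hc]
    · intro x hx
      exact ⟨(ha0 i).trans hx.1.le, hx.2.le.trans (ha1 i)⟩
  have hsC : ∀ t ∈ Icc (0:ℝ) 1, s t ∈ C := by
    intro t ht
    refine ⟨⟨hs0 ▸ hs_mono ht.1, hs1 ▸ hs_mono ht.2⟩, ?_⟩
    simp only [mem_iUnion, not_exists]
    intro i hi
    rcases le_or_gt t (q i) with h | h
    · exact absurd (hs_mono h) (not_le.2 hi.1)
    · exact absurd (hs_jump i t h) (not_lt.2 hi.2.le)
  -- measure identity
  have hmeas : volume.restrict C = ENNReal.ofReal c • Measure.map s (volume.restrict (Icc 0 1)) := by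
    symm
    have : IsFiniteMeasure (volume.restrict C) := ⟨by simp [hvol]⟩
    have hle : ENNReal.ofReal c • Measure.map s (volume.restrict (Icc 0 1)) ≤ volume.restrict C := by
      rw [Measure.le_iff]
      intro A hA
      have hanti : AntilipschitzWith (Real.toNNReal c⁻¹) s := by
        apply AntilipschitzWith.of_le_mul_dist
        intro x y
        rw [Real.coe_toNNReal _ (by positivity), ← div_eq_inv_mul, le_div_iff₀ hc0, Real.dist_eq, Real.dist_eq]
        rcases le_total x y with h | h
        · rw [abs_sub_comm, abs_sub_comm (s x), abs_of_nonneg (by linarith), abs_of_nonneg (sub_nonneg.2 (hs_mono h))]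
          linarith [hs_exp x y h]
        · rw [abs_of_nonneg (by linarith), abs_of_nonneg (sub_nonneg.2 (hs_mono h))]
          linarith [hs_exp y x h]
      have h1 := hanti.hausdorffMeasure_preimage_le zero_le_one (A ∩ C)
      rw [hausdorffMeasure_real, ENNReal.rpow_one] at h1
      rw [Measure.smul_apply, Measure.map_apply hs_mono.measurable hA,
        Measure.restrict_apply (hs_mono.measurable hA), Measure.restrict_apply hA, smul_eq_mul]
      calc _ ≤ ENNReal.ofReal c * volume (s ⁻¹' (A ∩ C)) := by
            gcongr
            rintro t ⟨h, h'⟩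
            exact ⟨h, hsC t h'⟩
        _ ≤ ENNReal.ofReal c * (ENNReal.ofReal c⁻¹ * volume (A ∩ C)) := by gcongr; exact h1
        _ = _ := by
            rw [← mul_assoc, ← ENNReal.ofReal_mul hc0.le, mul_inv_cancel₀ hc0.ne', ENNReal.ofReal_one, one_mul]
    have : IsFiniteMeasure (ENNReal.ofReal c • Measure.map s (volume.restrict (Icc 0 1))) :=
      isFiniteMeasure_of_le _ hle
    refine Measure.eq_of_le_of_measure_univ_eq hle ?_
    rw [Measure.smul_apply, Measure.map_apply hs_mono.measurable MeasurableSet.univ]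
    simp [hvol]
  -- the density
  set b : ι → ℝ → ℝ := fun i => bump (a i) (w i) (J i) with hb
  have hb0 : ∀ i x, 0 ≤ b i x := fun i x => bump_nonneg (hw i) (hJ i) x
  have hbz : ∀ i x, x ∉ gap i → b i x = 0 := fun i x h => bump_zero (hw i) h
  set ψ : ℝ → ℝ := fun x => ∑' i, b i x with hψ
  have hψnon : ∀ x, (∀ i, x ∉ gap i) → ψ x = 0 := by
    intro x h
    simp [hψ, fun i => hbz i x (h i)]
  have hψin : ∀ x i, x ∈ gap i → ∀ j, j ≠ i → b j x = 0 := by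
    intro x i hx j hj
    exact hbz j x fun h => (Set.disjoint_left.1 (hdisj hj)) h hx
  have hsumm : ∀ x, Summable fun i => b i x := by
    intro x
    by_cases h : ∃ i, x ∈ gap i
    · obtain ⟨i, hi⟩ := h
      exact (hasSum_single i (hψin x i hi)).summable
    · push Not at h
      simp only [fun i => hbz i x (h i)]
      exact summable_zero
  have hψ0 : ∀ x, 0 ≤ ψ x := fun x => tsum_nonneg fun i => hb0 i x
  have hhold : ∀ α ∈ Ioo (0:ℝ) 1, ∃ H, 0 ≤ H ∧ ∀ x y, |ψ x - ψ y| ≤ H * |x - y| ^ α := by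
    intro α hα
    obtain ⟨H, hH⟩ := hH α hα
    have hH' : ∀ i, J i ≤ |H| * w i ^ (1 + α) := fun i => (hH i).trans
      (mul_le_mul_of_nonneg_right (le_abs_self H) (Real.rpow_nonneg (hw' i) _))
    have one : ∀ x y, ψ x - ψ y ≤ 6 * |H| * |x - y| ^ α := by
      intro x y
      by_cases h : ∃ i, x ∈ gap i
      · obtain ⟨i, hi⟩ := h
        have e : ψ x = b i x := tsum_eq_single i (hψin x i hi)
        have e2 : b i y ≤ ψ y := (hsumm y).le_tsum i fun j _ => hb0 j y
        have := bump_holder (a := a i) (hw i) (hJ i) hα.1 hα.2 (hH' i) x y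
        simp only [hb] at e e2
        linarith
      · push Not at h
        rw [hψnon x h]
        have := hψ0 y
        have : 0 ≤ 6 * |H| * |x - y| ^ α := by positivity
        linarith
    refine ⟨6 * |H|, by positivity, fun x y => abs_sub_le_iff.2 ⟨one x y, ?_⟩⟩
    rw [abs_sub_comm]; exact one y x
  have hψc : Continuous ψ := by
    obtain ⟨H, hH0, hH⟩ := hhold (1/2) (by norm_num)
    rw [continuous_iff_continuousAt]
    intro x
    rw [ContinuousAt, tendsto_iff_dist_tendsto_zero]
    refine squeeze_zero (fun _ => dist_nonneg) (fun y => hH y x) ?_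
    have : Continuous fun y : ℝ => H * |y - x| ^ ((1:ℝ)/2) :=
      continuous_const.mul ((by fun_prop : Continuous fun y : ℝ => |y - x|).rpow_const
        (fun _ => Or.inr (by norm_num)))
    have := this.tendsto x
    simpa using this
  set g : ℝ → ℝ := fun x => ∫ t in (0:ℝ)..x, ψ t with hg
  have hgd : ∀ x, HasDerivAt g (ψ x) x := fun x =>
    intervalIntegral.integral_hasDerivAt_right (hψc.intervalIntegrable _ _)
      (hψc.stronglyMeasurableAtFilter _ _) hψc.continuousAt
  have hgc : Continuous g := continuous_iff_continuousAt.2 fun x => (hgd x).continuousAt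
  refine ⟨g, ψ, C, c, hc0, hCcomp, hCsub, hvol, hgd, ?_, hhold, ?_⟩
  · intro x hx
    exact hψnon x fun i hi => hx.2 (mem_iUnion.2 ⟨i, hi⟩)
  · have hG := (jumpSum_mono (q := q) hJ hJs).measurable
    rw [hmeas, Measure.map_smul, Measure.map_map hgc.measurable hs_mono.measurable]
    congr 1
    apply Measure.map_congr
    filter_upwards [ae_restrict_mem measurableSet_Icc] with t ht
    simp only [Function.comp, hg]
    rw [intervalIntegral.integral_of_le (hs0 ▸ hs_mono ht.1)]
    have key : ∀ i, ∫ x in Ioc 0 (s t), b i x = if q i < t then J i else 0 := by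
      intro i
      rcases le_or_gt t (q i) with h | h
      · have h' : s t ≤ a i := hs_mono h
        rw [bump_setIntegral (hw i) (ha0 i) (Or.inl h'), if_neg (not_lt.2 h), if_neg (not_lt.2 h')]
      · have h' := hs_jump i t h
        rw [bump_setIntegral (hw i) (ha0 i) (Or.inr h'.le), if_pos h, if_pos]
        have := hw i
        simp only [ha]; linarith
    rw [hψ, ← integral_tsum_of_summable_integral_norm]
    · simp only [key]; rfl
    · intro i; exact (bump_integrable (hw i)).integrableOn
    · simp only [Real.norm_of_nonneg (hb0 _ _), key]
      exact jumpSum_summable hJ hJs t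

lemma integral_halves (h : ℝ → ℂ) (hi : ∀ a b, IntervalIntegrable h volume a b) :
    ∫ u in (0:ℝ)..1, h u =
      ((∫ u in (0:ℝ)..1, h (u / 2)) + ∫ u in (0:ℝ)..1, h ((1 + u) / 2)) / 2 := by
  have e : ∀ u : ℝ, (1 + u) / 2 = 1/2 + u / 2 := fun u => by ring
  simp_rw [e]
  rw [intervalIntegral.integral_comp_div (f := h) two_ne_zero,
    intervalIntegral.integral_comp_add_div (f := h) two_ne_zero,
    ← intervalIntegral.integral_add_adjacent_intervals (hi 0 (1/2)) (hi (1/2) 1)]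
  norm_num
  ring

lemma intervalIntegrable_exp {G : ℝ → ℝ} (hG : Measurable G) (t a b : ℝ) :
    IntervalIntegrable (fun u => Complex.exp (t * G u * Complex.I)) volume a b := by
  refine IntervalIntegrable.mono_fun' (g := fun _ => (1:ℝ)) (by simp) ?_ ?_
  · exact (by fun_prop : Measurable fun u => Complex.exp (t * G u * Complex.I)).aestronglyMeasurable
  · refine Filter.Eventually.of_forall fun u => ?_
    have : (t * G u * Complex.I : ℂ) = ((t * G u : ℝ) : ℂ) * Complex.I := by push_cast; ring
    simp only [this, Complex.norm_exp_ofReal_mul_I, le_refl]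

/-- The law of `G` under Lebesgue measure on the unit interval. -/
def lawOf (G : ℝ → ℝ) : Measure ℝ := Measure.map G (volume.restrict (Icc 0 1))

lemma lawOf_prob {G : ℝ → ℝ} (hG : Measurable G) : IsProbabilityMeasure (lawOf G) := by
  have : IsProbabilityMeasure (volume.restrict (Icc (0:ℝ) 1)) := ⟨by simp⟩
  exact Measure.isProbabilityMeasure_map hG.aemeasurable

lemma charFun_lawOf {G : ℝ → ℝ} (hG : Measurable G) (t : ℝ) :
    charFun (lawOf G) t = ∫ u in (0:ℝ)..1, Complex.exp (t * G u * Complex.I) := by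
  rw [charFun_apply_real, lawOf, integral_map hG.aemeasurable
    (by fun_prop : Measurable fun u : ℝ => Complex.exp (t * u * Complex.I)).aestronglyMeasurable,
    integral_Icc_eq_integral_Ioc, intervalIntegral.integral_of_le zero_le_one]

lemma charFun_selfsim {G : ℝ → ℝ} (hG : Measurable G) (m : ℝ)
    (h0 : ∀ u ∈ Ioo (0:ℝ) 1, G (u / 2) = G u / m)
    (h1 : ∀ u ∈ Ioo (0:ℝ) 1, G ((1 + u) / 2) = (G u + 1) / m) (t : ℝ) :
    charFun (lawOf G) t =
      charFun (lawOf G) (t / m) * ((1 + Complex.exp ((t / m : ℝ) * Complex.I)) / 2) := by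
  rw [charFun_lawOf hG, charFun_lawOf hG, integral_halves _ (intervalIntegrable_exp hG t)]
  have e0 : ∫ u in (0:ℝ)..1, Complex.exp (t * G (u / 2) * Complex.I) =
      ∫ u in (0:ℝ)..1, Complex.exp ((t / m : ℝ) * G u * Complex.I) := by
    apply intervalIntegral.integral_congr_Ioo_of_le zero_le_one
    intro u hu
    simp only [h0 u hu]
    congr 1; push_cast; ring
  have e1 : ∫ u in (0:ℝ)..1, Complex.exp (t * G ((1 + u) / 2) * Complex.I) =
      ∫ u in (0:ℝ)..1, Complex.exp ((t / m : ℝ) * G u * Complex.I) *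
        Complex.exp ((t / m : ℝ) * Complex.I) := by
    apply intervalIntegral.integral_congr_Ioo_of_le zero_le_one
    intro u hu
    simp only [h1 u hu]
    rw [← Complex.exp_add]
    congr 1; push_cast; ring
  rw [e0, e1, intervalIntegral.integral_mul_const]
  ring

lemma half_norm_le (t : ℝ) : ‖(1 + Complex.exp ((t : ℝ) * Complex.I)) / 2‖ ≤ 1 := by
  rw [norm_div]
  have := norm_add_le (1:ℂ) (Complex.exp ((t : ℝ) * Complex.I))
  rw [Complex.norm_exp_ofReal_mul_I] at this
  simp at this ⊢
  linarith

lemma charFun_prod_eq {G : ℝ → ℝ} (hG : Measurable G)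
    (h0 : ∀ u ∈ Ioo (0:ℝ) 1, G (u / 2) = G u / 4)
    (h1 : ∀ u ∈ Ioo (0:ℝ) 1, G ((1 + u) / 2) = (G u + 1) / 4) (t : ℝ) :
    charFun (lawOf G) (2 * t) * charFun (lawOf G) t = charFun (lawOf id) t := by
  have := lawOf_prob hG
  have := lawOf_prob measurable_id
  have hU := charFun_selfsim measurable_id 2 (fun u _ => by simp) (fun u _ => by simp [add_comm])
  have hS := charFun_selfsim hG 4 h0 h1
  set D : ℝ → ℂ := fun t => charFun (lawOf G) (2 * t) * charFun (lawOf G) t - charFun (lawOf id) t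
    with hD
  have hDc : Continuous D := by
    have hc1 := continuous_charFun (μ := lawOf G)
    have hc2 := continuous_charFun (μ := lawOf id)
    exact ((hc1.comp (by fun_prop)).mul hc1).sub hc2
  have hD0 : D 0 = 0 := by simp [hD]
  have step : ∀ t, ‖D t‖ ≤ ‖D (t / 4)‖ := by
    intro t
    have e : D t = D (t / 4) * (((1 + Complex.exp ((t / 2 : ℝ) * Complex.I)) / 2) *
        ((1 + Complex.exp ((t / 4 : ℝ) * Complex.I)) / 2)) := by
      simp only [hD]
      rw [hS (2 * t), hS t, hU t, hU (t / 2), show 2 * t / 4 = t / 2 by ring,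
        show 2 * (t / 4) = t / 2 by ring, show t / 2 / 2 = t / 4 by ring]
      ring
    rw [e, norm_mul, norm_mul]
    have a1 := half_norm_le (t / 2)
    have a2 := half_norm_le (t / 4)
    have := mul_le_one₀ a1 (norm_nonneg _) a2
    exact mul_le_of_le_one_right (norm_nonneg _) this
  have iter : ∀ n : ℕ, ‖D t‖ ≤ ‖D (t * (1 / 4) ^ n)‖ := by
    intro n
    induction n with
    | zero => simp
    | succ n ih =>
      refine ih.trans ((step _).trans (le_of_eq ?_))
      congr 2; rw [pow_succ]; ring
  have lim : Filter.Tendsto (fun n : ℕ => ‖D (t * (1 / 4) ^ n)‖) Filter.atTop (nhds 0) := by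
    have h : Filter.Tendsto (fun n : ℕ => t * (1 / 4 : ℝ) ^ n) Filter.atTop (nhds 0) := by
      simpa using (tendsto_pow_atTop_nhds_zero_of_lt_one (r := (1/4:ℝ)) (by norm_num) (by norm_num)).const_mul t
    have := ((hDc.tendsto 0).comp h).norm
    simpa [hD0] using this
  have : ‖D t‖ ≤ 0 := ge_of_tendsto' lim iter
  exact sub_eq_zero.1 (norm_le_zero_iff.1 this)

lemma pushforward_sum {G g : ℝ → ℝ} {C : Set ℝ} {c : ℝ} (hc : 0 < c) (hg : Measurable g)
    (hG : Measurable G) (hC : volume C = ENNReal.ofReal c)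
    (h0 : ∀ u ∈ Ioo (0:ℝ) 1, G (u / 2) = G u / 4)
    (h1 : ∀ u ∈ Ioo (0:ℝ) 1, G ((1 + u) / 2) = (G u + 1) / 4)
    (hm : Measure.map g (volume.restrict C) = ENNReal.ofReal c • lawOf G) :
    Measure.map (fun p : ℝ × ℝ => 2 * g p.1 + g p.2)
      ((volume.restrict C).prod (volume.restrict C)) =
      ENNReal.ofReal (c * c) • volume.restrict (Icc (0:ℝ) 1) := by
  have : IsFiniteMeasure (volume.restrict C) := ⟨by simp [hC]⟩
  have hid : lawOf id = volume.restrict (Icc (0:ℝ) 1) := by simp [lawOf]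
  have : IsFiniteMeasure (ENNReal.ofReal (c * c) • volume.restrict (Icc (0:ℝ) 1)) :=
    Measure.smul_finite _ ENNReal.ofReal_ne_top
  have hF : Measurable (fun p : ℝ × ℝ => 2 * g p.1 + g p.2) := by fun_prop
  have hcg : ∀ t : ℝ, ∫ x, Complex.exp (t * g x * Complex.I) ∂(volume.restrict C) =
      c * charFun (lawOf G) t := by
    intro t
    have h := charFun_apply_real (μ := Measure.map g (volume.restrict C)) t
    rw [integral_map hg.aemeasurable
      (by fun_prop : Measurable fun u : ℝ => Complex.exp (t * u * Complex.I)).aestronglyMeasurable] at h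
    rw [← h, hm, charFun_apply_real, integral_smul_measure, ← charFun_apply_real,
      ENNReal.toReal_ofReal hc.le]
    simp
  apply Measure.ext_of_charFun
  ext t
  rw [charFun_apply_real, integral_map hF.aemeasurable
    (by fun_prop : Measurable fun u : ℝ => Complex.exp (t * u * Complex.I)).aestronglyMeasurable]
  have e : ∀ p : ℝ × ℝ, Complex.exp (t * ((2 * g p.1 + g p.2 : ℝ) : ℂ) * Complex.I) =
      Complex.exp ((2 * t : ℝ) * g p.1 * Complex.I) * Complex.exp (t * g p.2 * Complex.I) := by
    intro p; rw [← Complex.exp_add]; congr 1; push_cast; ring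
  simp_rw [e]
  rw [integral_prod_mul (fun x => Complex.exp ((2 * t : ℝ) * g x * Complex.I))
    (fun x => Complex.exp (t * g x * Complex.I)), hcg, hcg,
    charFun_apply_real (μ := ENNReal.ofReal (c * c) • volume.restrict (Icc (0:ℝ) 1)),
    integral_smul_measure, ← charFun_apply_real, ← hid, ← charFun_prod_eq hG h0 h1,
    ENNReal.toReal_ofReal (by positivity)]
  rw [Complex.real_smul]
  push_cast
  ring

/-- Dyadic rationals indexed by binary words. -/
def qL : List Bool → ℝ
  | [] => 1 / 2
  | b :: l => ((if b then 1 else 0) + qL l) / 2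

lemma qL_mem (l : List Bool) : 0 < qL l ∧ qL l < 1 := by
  induction l with
  | nil => norm_num [qL]
  | cons b l ih => cases b <;> simp [qL] <;> constructor <;> linarith

lemma qL_inj : Function.Injective qL := by
  intro l
  induction l with
  | nil =>
    intro m h
    cases m with
    | nil => rfl
    | cons b m => have := qL_mem m; cases b <;> simp [qL] at h <;> linarith
  | cons b l ih =>
    intro m h
    have hl := qL_mem l
    cases m with
    | nil => cases b <;> simp [qL] at h <;> linarith
    | cons b' m =>
      have hm := qL_mem m
      cases b <;> cases b' <;> simp [qL] at h
      · rw [ih h]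
      · linarith
      · linarith
      · rw [ih h]

/-- Splitting words by their first letter. -/
def listSplit : Unit ⊕ (List Bool ⊕ List Bool) ≃ List Bool where
  toFun
    | Sum.inl _ => []
    | Sum.inr (Sum.inl l) => false :: l
    | Sum.inr (Sum.inr l) => true :: l
  invFun
    | [] => Sum.inl ()
    | false :: l => Sum.inr (Sum.inl l)
    | true :: l => Sum.inr (Sum.inr l)
  left_inv x := by rcases x with _ | _ | _ <;> rfl
  right_inv l := by rcases l with _ | ⟨_ | _, l⟩ <;> rfl

lemma tsum_list {f : List Bool → ℝ} (h0 : Summable fun l => f (false :: l))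
    (h1 : Summable fun l => f (true :: l)) :
    ∑' l, f l = f [] + ((∑' l, f (false :: l)) + ∑' l, f (true :: l)) := by
  refine HasSum.tsum_eq ?_
  rw [← listSplit.hasSum_iff]
  refine HasSum.sum ?_ (HasSum.sum ?_ ?_)
  · exact hasSum_unique _
  · exact h0.hasSum
  · exact h1.hasSum

lemma hasSum_length {F : ℕ → ℝ} (hF : ∀ n, 0 ≤ F n) (hs : Summable fun n => 2 ^ n * F n) :
    HasSum (fun l : List Bool => F l.length) (∑' n, 2 ^ n * F n) := by
  rw [← (List.equivSigmaTuple (α := Bool)).symm.hasSum_iff]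
  have e : (fun l : List Bool => F l.length) ∘ (List.equivSigmaTuple (α := Bool)).symm =
      fun x => F x.1 := by
    funext x; simp
  rw [e]
  have hfib : ∀ n, ∑' _ : Fin n → Bool, F n = 2 ^ n * F n := by
    intro n; simp [tsum_fintype]
  have hS : Summable (fun x : (Σ n, Fin n → Bool) => F x.1) := by
    rw [summable_sigma_of_nonneg fun x => hF _]
    refine ⟨fun n => (hasSum_fintype _).summable, ?_⟩
    simpa only [hfib] using hs
  have := hS.hasSum
  rw [hS.tsum_sigma] at this
  simpa only [hfib] using this

/-- jump sizes -/
def JL (l : List Bool) : ℝ := 1 / 6 * (1 / 4) ^ l.length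

lemma JL_nonneg (l) : 0 ≤ JL l := by unfold JL; positivity

lemma JL_summable : Summable JL := by
  refine (hasSum_length (F := fun n => 1 / 6 * (1 / 4) ^ n) (fun n => by positivity) ?_).summable
  have : (fun n : ℕ => (2:ℝ) ^ n * (1 / 6 * (1 / 4) ^ n)) = fun n => 1 / 6 * (1 / 2) ^ n := by
    funext n
    rw [show (1/2:ℝ) = 2 * (1/4) by norm_num, mul_pow]; ring
  rw [this]
  exact (summable_geometric_of_lt_one (by norm_num) (by norm_num)).mul_left _

lemma JL_cons (b l) : JL (b :: l) = JL l / 4 := by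
  simp [JL, pow_succ]; ring

lemma JL_tsum : ∑' l, JL l = 1 / 3 := by
  have h : ∀ b, Summable fun l => JL (b :: l) := fun b => by
    simp only [JL_cons]; exact JL_summable.div_const 4
  have := tsum_list (h false) (h true)
  simp only [JL_cons, tsum_div_const] at this
  have e : JL [] = 1 / 6 := by simp [JL]
  linarith

lemma jumpSum_split (t : ℝ) : jumpSum qL JL t = (if 1 / 2 < t then 1 / 6 else 0) +
    (jumpSum qL JL (2 * t) / 4 + jumpSum qL JL (2 * t - 1) / 4) := by
  have h0 : ∀ l, (if qL (false :: l) < t then JL (false :: l) else 0) =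
      (if qL l < 2 * t then JL l else 0) / 4 := by
    intro l
    have : qL (false :: l) < t ↔ qL l < 2 * t := by simp [qL]; constructor <;> intro h <;> linarith
    simp only [this, JL_cons]; split_ifs <;> simp
  have h1 : ∀ l, (if qL (true :: l) < t then JL (true :: l) else 0) =
      (if qL l < 2 * t - 1 then JL l else 0) / 4 := by
    intro l
    have : qL (true :: l) < t ↔ qL l < 2 * t - 1 := by
      simp [qL]; constructor <;> intro h <;> linarith
    simp only [this, JL_cons]; split_ifs <;> simp
  have s := fun t => jumpSum_summable (q := qL) JL_nonneg JL_summable t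
  rw [jumpSum, tsum_list]
  · simp only [h0, h1, tsum_div_const]
    simp [qL, JL, jumpSum]
  · simp only [h0]; exact (s _).div_const 4
  · simp only [h1]; exact (s _).div_const 4

lemma jumpSum_nonpos {t : ℝ} (ht : t ≤ 0) : jumpSum qL JL t = 0 := by
  have : ∀ l, ¬ qL l < t := fun l => not_lt.2 (ht.trans (qL_mem l).1.le)
  simp [jumpSum, this]

lemma jumpSum_ge_one {t : ℝ} (ht : 1 ≤ t) : jumpSum qL JL t = 1 / 3 := by
  have : ∀ l, qL l < t := fun l => (qL_mem l).2.trans_le ht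
  simp only [jumpSum, this, if_true, JL_tsum]

lemma GL_zero (u : ℝ) (hu : u ∈ Ioo (0:ℝ) 1) : jumpSum qL JL (u / 2) = jumpSum qL JL u / 4 := by
  obtain ⟨h1, h2⟩ := hu
  rw [jumpSum_split, if_neg (by linarith), jumpSum_nonpos (t := 2 * (u / 2) - 1) (by linarith),
    show 2 * (u / 2) = u by ring]
  ring

lemma GL_one (u : ℝ) (hu : u ∈ Ioo (0:ℝ) 1) :
    jumpSum qL JL ((1 + u) / 2) = (jumpSum qL JL u + 1) / 4 := by
  obtain ⟨h1, h2⟩ := hu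
  rw [jumpSum_split, if_pos (by linarith), jumpSum_ge_one (t := 2 * ((1 + u) / 2)) (by linarith),
    show 2 * ((1 + u) / 2) - 1 = u by ring]
  ring

lemma exists_widths : ∃ w : List Bool → ℝ, (∀ l, 0 < w l) ∧ Summable w ∧ ∑' l, w l < 1 ∧
    ∀ α ∈ Ioo (0:ℝ) 1, ∃ H, ∀ l, JL l ≤ H * w l ^ (1 + α) := by
  set u : ℕ → ℝ := fun n => 1 / ((n:ℝ) + 1) ^ 2 with hu
  have hus : Summable u := by
    have := (summable_nat_add_iff 1).2 (Real.summable_one_div_nat_pow.2 (by norm_num : 1 < 2))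
    simpa [hu] using this
  have hu0 : ∀ n, 0 < u n := fun n => by simp only [hu]; positivity
  set S := ∑' n, u n with hS
  have hule : ∀ n, u n ≤ S := fun n => hus.le_tsum n fun j _ => (hu0 j).le
  have hS0 : 0 < S := (hu0 0).trans_le (hule 0)
  set v : ℕ → ℝ := fun n => u n / (2 * S) with hv
  have hv0 : ∀ n, 0 < v n := fun n => by have := hu0 n; simp only [hv]; positivity
  have hv1 : ∀ n, v n ≤ 1 := fun n => by
    simp only [hv]; rw [div_le_one (by positivity)]; linarith [hule n]
  set F : ℕ → ℝ := fun n => (1 / 2) ^ n * v n with hF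
  have hF0 : ∀ n, 0 < F n := fun n => mul_pos (by positivity) (hv0 n)
  have e : (fun n => 2 ^ n * F n) = v := by
    funext n
    simp only [hF, ← mul_assoc, ← mul_pow]; norm_num
  have hsum := hasSum_length (fun n => (hF0 n).le) (by rw [e]; exact hus.div_const _)
  rw [e] at hsum
  have hvs : ∑' n, v n = 1 / 2 := by
    simp only [hv, tsum_div_const, ← hS]; field_simp
  refine ⟨fun l => F l.length, fun l => hF0 _, hsum.summable, ?_, ?_⟩
  · rw [hsum.tsum_eq, hvs]; norm_num
  · rintro α ⟨h0, h1⟩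
    set ρ : ℝ := (1 / 2 : ℝ) ^ (1 - α) with hρ
    have hρ0 : 0 < ρ := by positivity
    have hρ1 : ρ < 1 := Real.rpow_lt_one (by norm_num) (by norm_num) (by linarith)
    obtain ⟨B, hB⟩ := (tendsto_pow_const_mul_const_pow_of_lt_one 4 hρ0.le hρ1).bddAbove_range
    have hB' : ∀ n : ℕ, ((n:ℝ) + 1) ^ 4 * ρ ^ n ≤ B / ρ := by
      intro n
      have : ((n + 1 : ℕ) : ℝ) ^ 4 * ρ ^ (n + 1) ≤ B := hB ⟨n + 1, rfl⟩
      rw [le_div_iff₀ hρ0]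
      push_cast at this
      rw [pow_succ ρ] at this
      linarith
    refine ⟨B / ρ * (4 * S ^ 2), fun l => ?_⟩
    change JL l ≤ _ * F l.length ^ (1 + α)
    generalize hn : l.length = n
    have hJ : JL l ≤ (1 / 4) ^ n := by
      simp only [JL, hn]
      have : (0:ℝ) ≤ (1 / 4) ^ n := by positivity
      linarith
    have hp : (0:ℝ) < (1 / 2) ^ n := by positivity
    have hsplit : ((1:ℝ) / 4) ^ n = ((1 / 2 : ℝ) ^ n) ^ (1 + α) * ρ ^ n := by
      rw [hρ, ← Real.rpow_natCast ((1/2:ℝ) ^ (1 - α)), ← Real.rpow_mul (by norm_num), mul_comm (1 - α),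
        Real.rpow_mul (by norm_num), Real.rpow_natCast, ← Real.rpow_add hp,
        show 1 + α + (1 - α) = (2:ℕ) by push_cast; ring, Real.rpow_natCast, ← pow_mul, mul_comm, pow_mul]
      norm_num
    have hvv : v n ^ 2 ≤ v n ^ (1 + α) := by
      rw [← Real.rpow_natCast]
      exact Real.rpow_le_rpow_of_exponent_ge (hv0 n) (hv1 n) (by push_cast; linarith)
    have hρv : ρ ^ n ≤ B / ρ * (4 * S ^ 2) * v n ^ 2 := by
      have h := hB' n
      have : v n ^ 2 = 1 / (((n:ℝ) + 1) ^ 4 * (4 * S ^ 2)) := by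
        simp only [hv, hu]; field_simp; ring
      rw [this]
      have h5 : B / ρ * (4 * S ^ 2) * (1 / (((n:ℝ) + 1) ^ 4 * (4 * S ^ 2))) =
        (B / ρ) / ((n:ℝ) + 1) ^ 4 := by field_simp
      rw [h5, le_div_iff₀ (by positivity)]
      linarith
    have hBS : 0 ≤ B / ρ * (4 * S ^ 2) := by
      have := hB' 0
      have : 0 ≤ B / ρ := le_trans (by positivity) this
      positivity
    calc JL l ≤ (1 / 4) ^ n := hJ
      _ = ((1 / 2 : ℝ) ^ n) ^ (1 + α) * ρ ^ n := hsplit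
      _ ≤ ((1 / 2 : ℝ) ^ n) ^ (1 + α) * (B / ρ * (4 * S ^ 2) * v n ^ (1 + α)) := by
          gcongr
          exact hρv.trans (mul_le_mul_of_nonneg_left hvv hBS)
      _ = B / ρ * (4 * S ^ 2) * F n ^ (1 + α) := by
          simp only [hF]
          rw [Real.mul_rpow hp.le (hv0 n).le]; ring

lemma unitSquare_uniqueDiff : UniqueDiffOn ℝ unitSquare := by
  apply uniqueDiffOn_convex
  · intro x hx y hy a b ha hb hab i
    exact (convex_Icc (0:ℝ) 1) (hx i) (hy i) ha hb hab
  · refine ⟨WithLp.toLp 2 fun _ => 1 / 2, ?_⟩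
    have ho : IsOpen {x : EuclideanSpace ℝ (Fin 2) | ∀ i, x i ∈ Ioo (0:ℝ) 1} := by
      simp only [Set.setOf_forall]
      exact isOpen_iInter_of_finite fun i => isOpen_Ioo.preimage (by fun_prop)
    refine interior_maximal ?_ ho ?_
    · intro x hx i; exact Ioo_subset_Icc_self (hx i)
    · intro i; norm_num

lemma abs_coord_le (x y : EuclideanSpace ℝ (Fin 2)) (i : Fin 2) : |x i - y i| ≤ dist x y := by
  rw [dist_eq_norm]
  have := PiLp.norm_apply_le (x - y) i
  simpa using this

/-- There exist `f : [0,1]² → ℝ` of class `C^{1,α}` for every `α ∈ (0,1)` and a compact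
set `K ⊆ [0,1]²` with `L²(K) = r > 0`, such that `∇f = 0` on `K` and
`f_#(𝟙_K L²) = r · 𝟙_{[0,1]} L¹`. -/
theorem exists_C1Holder_critical_compact_with_uniform_pushforward :
    ∃ (f : EuclideanSpace ℝ (Fin 2) → ℝ) (K : Set (EuclideanSpace ℝ (Fin 2))) (r : ℝ),
      (∀ α ∈ Set.Ioo (0:ℝ) 1, IsC1Holder f α) ∧
      IsCompact K ∧ K ⊆ unitSquare ∧
      0 < r ∧ volume K = ENNReal.ofReal r ∧
      (∀ x ∈ K, fderivWithin ℝ f unitSquare x = 0) ∧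
      Measure.map f (volume.restrict K) =
        ENNReal.ofReal r • volume.restrict (Set.Icc (0:ℝ) 1) := by
  obtain ⟨w, hw, hws, hw1, hH⟩ := exists_widths
  obtain ⟨g, ψ, C, c, hc, hCc, hCs, hvol, hgd, hψC, hhold, hmap⟩ :=
    cantor_construction qL w JL qL_inj (fun l => (qL_mem l).1) (fun l => (qL_mem l).2) hw hws hw1
      JL_nonneg JL_summable hH
  have hgc : Continuous g := continuous_iff_continuousAt.2 fun x => (hgd x).continuousAt
  have hG := (jumpSum_mono (q := qL) JL_nonneg JL_summable).measurable
  have hpush := pushforward_sum hc hgc.measurable hG hvol GL_zero GL_one hmap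
  have : IsFiniteMeasure (volume.restrict C) := ⟨by simp [hvol]⟩
  -- coordinates
  let p : Fin 2 → (EuclideanSpace ℝ (Fin 2) →L[ℝ] ℝ) := fun i => EuclideanSpace.proj i
  have hp : ∀ i x, p i x = x i := fun i x => rfl
  have hpn : ∀ i, ‖p i‖ ≤ 1 := fun i => by
    refine ContinuousLinearMap.opNorm_le_bound _ zero_le_one fun x => ?_
    rw [one_mul]; exact PiLp.norm_apply_le x i
  set f : EuclideanSpace ℝ (Fin 2) → ℝ := fun x => 2 * g (x 0) + g (x 1) with hf
  set K : Set (EuclideanSpace ℝ (Fin 2)) := {x | ∀ i, x i ∈ C} with hK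
  have hfd : ∀ x, HasFDerivAt f ((2 * ψ (x 0)) • p 0 + ψ (x 1) • p 1) x := by
    intro x
    have a0 := (hgd (x 0)).comp_hasFDerivAt x (p 0).hasFDerivAt
    have a1 := (hgd (x 1)).comp_hasFDerivAt x (p 1).hasFDerivAt
    have := (a0.const_mul 2).add a1
    rw [smul_smul] at this
    exact this
  have hfw : ∀ x ∈ unitSquare, fderivWithin ℝ f unitSquare x =
      (2 * ψ (x 0)) • p 0 + ψ (x 1) • p 1 := fun x hx =>
    (hfd x).hasFDerivWithinAt.fderivWithin (unitSquare_uniqueDiff x hx)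
  have hholdf : ∀ α ∈ Ioo (0:ℝ) 1, ∃ H : ℝ, ∀ x ∈ unitSquare, ∀ y ∈ unitSquare,
      ‖fderivWithin ℝ f unitSquare x - fderivWithin ℝ f unitSquare y‖ ≤ H * dist x y ^ α := by
    intro α hα
    obtain ⟨H, hH0, hH⟩ := hhold α hα
    refine ⟨3 * H, fun x hx y hy => ?_⟩
    rw [hfw x hx, hfw y hy]
    have e : (2 * ψ (x 0)) • p 0 + ψ (x 1) • p 1 - ((2 * ψ (y 0)) • p 0 + ψ (y 1) • p 1) =
        (2 * (ψ (x 0) - ψ (y 0))) • p 0 + (ψ (x 1) - ψ (y 1)) • p 1 := by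
      module
    have hb : ∀ i, |ψ (x i) - ψ (y i)| ≤ H * dist x y ^ α := fun i => by
      refine (hH _ _).trans (mul_le_mul_of_nonneg_left ?_ hH0)
      exact Real.rpow_le_rpow (abs_nonneg _) (abs_coord_le x y i) hα.1.le
    rw [e]
    refine (norm_add_le _ _).trans ?_
    rw [norm_smul, norm_smul, Real.norm_eq_abs, Real.norm_eq_abs, abs_mul, abs_two]
    have b0 := mul_le_of_le_one_right (by positivity : 0 ≤ 2 * |ψ (x 0) - ψ (y 0)|) (hpn 0)
    have b1 := mul_le_of_le_one_right (abs_nonneg (ψ (x 1) - ψ (y 1))) (hpn 1)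
    linarith [hb 0, hb 1]
  have hψc : Continuous ψ := by
    obtain ⟨H, hH0, hH⟩ := hhold (1/2) (by norm_num)
    rw [continuous_iff_continuousAt]
    intro x
    rw [ContinuousAt, tendsto_iff_dist_tendsto_zero]
    refine squeeze_zero (fun _ => dist_nonneg) (fun y => hH y x) ?_
    have : Continuous fun y : ℝ => H * |y - x| ^ ((1:ℝ)/2) :=
      continuous_const.mul ((by fun_prop : Continuous fun y : ℝ => |y - x|).rpow_const
        (fun _ => Or.inr (by norm_num)))
    have := this.tendsto x
    simpa using this
  have hKs : K ⊆ unitSquare := fun x hx i => hCs (hx i)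
  -- the measure preserving identification with the product
  let Φ : EuclideanSpace ℝ (Fin 2) → ℝ × ℝ := fun x => (x 0, x 1)
  have hΦ : MeasurePreserving Φ volume volume :=
    (volume_preserving_finTwoArrow ℝ).comp (PiLp.volume_preserving_ofLp (Fin 2))
  have hKpre : K = Φ ⁻¹' (C ×ˢ C) := by
    ext x; simp [hK, Φ, Fin.forall_fin_two]
  have hCm : MeasurableSet (C ×ˢ C) := hCc.isClosed.measurableSet.prod hCc.isClosed.measurableSet
  refine ⟨f, K, c * c, ?_, ?_, hKs, by positivity, ?_, ?_, ?_⟩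
  · intro α hα
    refine ⟨fun x _ => (hfd x).differentiableAt.differentiableWithinAt, ?_, hholdf α hα⟩
    refine ContinuousOn.congr ?_ hfw
    apply Continuous.continuousOn
    have c0 : Continuous fun x : EuclideanSpace ℝ (Fin 2) => ψ (x 0) := hψc.comp (p 0).continuous
    have c1 : Continuous fun x : EuclideanSpace ℝ (Fin 2) => ψ (x 1) := hψc.comp (p 1).continuous
    exact ((continuous_const.mul c0).smul continuous_const).add (c1.smul continuous_const)
  · have h1 : IsCompact (Set.univ.pi fun _ : Fin 2 => C) := isCompact_univ_pi fun _ => hCc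
    have h2 := h1.image (PiLp.continuous_toLp 2 (fun _ : Fin 2 => ℝ))
    convert h2 using 1
    ext x
    constructor
    · intro hx; exact ⟨x.ofLp, fun i _ => hx i, rfl⟩
    · rintro ⟨y, hy, rfl⟩ i; exact hy i (mem_univ i)
  · rw [hKpre, hΦ.measure_preimage hCm.nullMeasurableSet, Measure.volume_eq_prod,
      Measure.prod_prod, hvol, ENNReal.ofReal_mul hc.le]
  · intro x hx
    rw [hfw x (hKs hx), hψC _ (hx 0), hψC _ (hx 1)]
    simp
  · rw [← hpush, Measure.prod_restrict, ← Measure.volume_eq_prod,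
      ← (hΦ.restrict_preimage hCm).map_eq, ← hKpre,
      Measure.map_map (by fun_prop) hΦ.measurable]
    rfl
end
end

section
/- There exists a function f : [0,1]^2 → ℝ belonging to C^{1,α}([0,1]^2) for every α ∈ (0,1) which does not have the strong Sard property; in fact L¹(f(S)) = 1, where S is the critical set of f. -/
open MeasureTheory Set

noncomputable section

/-- The critical set of `f : [0,1]² → ℝ`: points of the square where `f` is either not
differentiable or has vanishing gradient. -/
def critSet (f : EuclideanSpace ℝ (Fin 2) → ℝ) : Set (EuclideanSpace ℝ (Fin 2)) :=
  {x | x ∈ unitSquare ∧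
    (¬ DifferentiableWithinAt ℝ f unitSquare x ∨ fderivWithin ℝ f unitSquare x = 0)}

namespace SardAux

/-- truncated square -/
def P (u : ℝ) : ℝ := (max u 0) ^ 2

lemma hasDerivAt_P (u : ℝ) : HasDerivAt P (2 * max u 0) u := by
  rcases lt_trichotomy u 0 with h | h | h
  · have h1 : P =ᶠ[nhds u] fun _ => (0:ℝ) := by
      filter_upwards [gt_mem_nhds h] with v hv
      simp [P, max_eq_right hv.le]
    rw [max_eq_right h.le, mul_zero]
    exact (hasDerivAt_const u (0:ℝ)).congr_of_eventuallyEq h1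
  · subst h
    rw [max_self, mul_zero, hasDerivAt_iff_isLittleO_nhds_zero]
    have : (fun h : ℝ => P (0 + h) - P 0 - h • (0:ℝ)) =O[nhds 0] fun h : ℝ => h ^ 2 := by
      refine Asymptotics.IsBigO.of_bound 1 (Filter.Eventually.of_forall fun v => ?_)
      simp only [P, zero_add, max_self, smul_zero, sub_zero, Real.norm_eq_abs, abs_pow, one_mul]
      norm_num
      rcases le_total v 0 with hv | hv
      · rw [max_eq_right hv]; nlinarith
      · rw [max_eq_left hv]
    exact this.trans_isLittleO (Asymptotics.isLittleO_pow_id one_lt_two)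
  · have h1 : P =ᶠ[nhds u] fun v => v ^ 2 := by
      filter_upwards [lt_mem_nhds h] with v hv
      simp [P, max_eq_left hv.le]
    rw [max_eq_left h.le]
    have := (hasDerivAt_pow 2 u).congr_of_eventuallyEq h1
    simpa using this

/-- `C^{1,1}` transition function -/
def T (u : ℝ) : ℝ := 2 * (P u - 2 * P (u - 1/2) + P (u - 1))

/-- its derivative -/
def tau (u : ℝ) : ℝ := 4 * (max u 0 - 2 * max (u - 1/2) 0 + max (u - 1) 0)

lemma hasDerivAt_T (u : ℝ) : HasDerivAt T (tau u) u := by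
  have h1 := hasDerivAt_P u
  have h2 := (hasDerivAt_P (u - 1/2)).comp u ((hasDerivAt_id u).sub_const (1/2))
  have h3 := (hasDerivAt_P (u - 1)).comp u ((hasDerivAt_id u).sub_const 1)
  have := ((h1.sub (h2.const_mul 2)).add h3).const_mul 2
  refine this.congr_deriv ?_
  unfold tau; ring

lemma T_of_nonpos {u : ℝ} (h : u ≤ 0) : T u = 0 := by
  unfold T P
  rw [max_eq_right h, max_eq_right (by linarith), max_eq_right (by linarith)]; norm_num

lemma tau_of_nonpos {u : ℝ} (h : u ≤ 0) : tau u = 0 := by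
  unfold tau
  rw [max_eq_right h, max_eq_right (by linarith), max_eq_right (by linarith)]; norm_num

lemma T_of_one_le {u : ℝ} (h : 1 ≤ u) : T u = 1 := by
  unfold T P
  rw [max_eq_left (by linarith), max_eq_left (by linarith), max_eq_left (by linarith)]; ring

lemma tau_of_one_le {u : ℝ} (h : 1 ≤ u) : tau u = 0 := by
  unfold tau
  rw [max_eq_left (by linarith), max_eq_left (by linarith), max_eq_left (by linarith)]; ring

lemma T_mem (u : ℝ) : 0 ≤ T u ∧ T u ≤ 1 := by
  unfold T P
  rcases le_total u 0 with h1 | h1 <;> rcases le_total (u - 1/2) 0 with h2 | h2 <;>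
    rcases le_total (u - 1) 0 with h3 | h3 <;>
    simp only [max_eq_left, max_eq_right, h1, h2, h3] <;> constructor <;> nlinarith

lemma abs_tau_le (u : ℝ) : |tau u| ≤ 2 := by
  unfold tau
  rw [abs_le]
  rcases le_total u 0 with h1 | h1 <;> rcases le_total (u - 1/2) 0 with h2 | h2 <;>
    rcases le_total (u - 1) 0 with h3 | h3 <;>
    simp only [max_eq_left, max_eq_right, h1, h2, h3] <;> constructor <;> linarith

lemma tau_lip (u v : ℝ) : |tau u - tau v| ≤ 16 * |u - v| := by
  have h (c : ℝ) : |max (u - c) 0 - max (v - c) 0| ≤ |u - v| := by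
    have := abs_max_sub_max_le_abs (u - c) (v - c) 0
    simpa using this
  have h0 := h 0
  simp only [sub_zero] at h0
  have h1 := h (1/2)
  have h2 := h 1
  unfold tau
  rw [abs_le] at *
  constructor <;> linarith [h0.1, h0.2, h1.1, h1.2, h2.1, h2.2]

/-- exponents -/
def p (k : ℕ) : ℕ := k + Nat.sqrt k + 1

def q (k : ℕ) : ℕ := Nat.sqrt k + (Nat.sqrt k + 1) ^ 2 + 1

def r (k : ℕ) : ℝ := (1/2) ^ p k

def δ (k : ℕ) : ℝ := (1/2) ^ q k

lemma r_pos (k : ℕ) : 0 < r k := by unfold r; positivity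
lemma δ_pos (k : ℕ) : 0 < δ k := by unfold δ; positivity

lemma p_lt {j k : ℕ} (h : j < k) : p j < p k := by
  have := Nat.sqrt_le_sqrt h.le
  unfold p; omega

lemma p_lt_q (k : ℕ) : p k < q k := by
  have := Nat.lt_succ_sqrt' k
  unfold p q; simp only [Nat.succ_eq_add_one] at this; omega

lemma q_le (k : ℕ) : q k ≤ k + 3 * Nat.sqrt k + 2 := by
  have := Nat.sqrt_le' k
  unfold q; nlinarith

lemma δ_le_r (k : ℕ) : δ k ≤ r k := by
  unfold δ r
  exact pow_le_pow_of_le_one (by norm_num) (by norm_num) (p_lt_q k).le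

lemma step (k : ℕ) : r (k+1) + (r (k+1) - δ (k+1)) ≤ r k - δ k := by
  have hlt := Nat.lt_succ_sqrt' k
  have hle := Nat.sqrt_le' k
  simp only [Nat.succ_eq_add_one] at hlt
  rcases (Nat.succ_le_of_lt hlt).lt_or_eq with h | h
  · have hs : Nat.sqrt (k+1) = Nat.sqrt k := by
      symm
      rw [Nat.eq_sqrt']
      constructor
      · omega
      · exact h
    have h1 : r (k+1) = r k / 2 := by
      unfold r p; rw [hs]; ring
    have h2 : δ (k+1) = δ k := by
      unfold δ q; rw [hs]
    rw [h1, h2]; linarith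
  · have hs : Nat.sqrt (k+1) = Nat.sqrt k + 1 := by
      symm
      rw [Nat.eq_sqrt']
      constructor
      · exact h.ge
      · have : k + 1 = (Nat.sqrt k + 1)^2 := h
        rw [this]; nlinarith
    have h1 : r (k+1) = r k / 4 := by
      unfold r p; rw [hs]; ring
    have h2 : δ k = r k / 2 := by
      unfold δ r p q; rw [← h, Nat.succ_eq_add_one]; ring
    have := δ_pos (k+1)
    rw [h2]; linarith

lemma partial_sum (n m : ℕ) :
    ∑ j ∈ Finset.range m, r (j + (n+1)) ≤ (r n - δ n) - (r (n+m) - δ (n+m)) := by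
  induction m with
  | zero => simp
  | succ m ih =>
    rw [Finset.sum_range_succ]
    have := step (n+m)
    have e : m + (n+1) = n + m + 1 := by ring
    rw [e, ← add_assoc n m 1]
    linarith

lemma partial_sum' (n m : ℕ) :
    ∑ j ∈ Finset.range m, r (j + (n+1)) ≤ r n - δ n := by
  have := partial_sum n m
  have := δ_le_r (n+m)
  linarith

lemma summable_r : Summable r := by
  rw [← summable_nat_add_iff 1]
  exact summable_of_sum_range_le (fun n => (r_pos _).le) (fun m => partial_sum' 0 m)

/-- phase -/
def th (k : ℕ) (x : ℝ) : ℝ := Real.pi / r k * (x + δ k / 2)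
def arg (k : ℕ) (x : ℝ) : ℝ := 1/2 - r k / (2 * δ k) * Real.sin (th k x)
def φ (k : ℕ) (x : ℝ) : ℝ := T (arg k x)
def φ' (k : ℕ) (x : ℝ) : ℝ := tau (arg k x) * (-(Real.pi / (2 * δ k)) * Real.cos (th k x))

lemma hasDerivAt_φ (k : ℕ) (x : ℝ) : HasDerivAt (φ k) (φ' k x) x := by
  have h1 : HasDerivAt (th k) (Real.pi / r k) x := by
    have := ((hasDerivAt_id x).add_const (δ k / 2)).const_mul (Real.pi / r k)
    rw [mul_one] at this
    exact this
  have h2 : HasDerivAt (arg k) (-(Real.pi / (2 * δ k)) * Real.cos (th k x)) x := by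
    have := (h1.sin.const_mul (r k / (2 * δ k))).const_sub (1/2)
    refine this.congr_deriv ?_
    have := (r_pos k).ne'
    have := (δ_pos k).ne'
    field_simp
  exact (hasDerivAt_T _).comp x h2

lemma abs_φ'_le (k : ℕ) (x : ℝ) : |φ' k x| ≤ 4 * (1 / δ k) := by
  unfold φ'
  have hd := δ_pos k
  rw [abs_mul, abs_mul, abs_neg, abs_of_pos (by positivity : 0 < Real.pi / (2 * δ k))]
  have h1 := abs_tau_le (arg k x)
  have h2 := Real.abs_cos_le_one (th k x)
  have h3 := Real.pi_le_four
  calc |tau (arg k x)| * (Real.pi / (2 * δ k) * |Real.cos (th k x)|)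
      ≤ 2 * (4 / (2 * δ k) * 1) := by gcongr
    _ = 4 * (1 / δ k) := by ring

lemma lip_φ' (k : ℕ) (x y : ℝ) : |φ' k x - φ' k y| ≤ 80 * (1 / δ k) * (|x - y| / δ k) := by
  have hd := δ_pos k
  have hr := r_pos k
  have hp := Real.pi_pos
  have hp4 := Real.pi_le_four
  have hth : |th k x - th k y| ≤ 4 * (|x - y| / δ k) := by
    have : th k x - th k y = Real.pi / r k * (x - y) := by unfold th; ring
    rw [this, abs_mul, abs_of_pos (by positivity)]
    calc Real.pi / r k * |x - y| ≤ 4 / δ k * |x - y| := by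
          gcongr
          exact δ_le_r k
      _ = _ := by ring
  have harg : |arg k x - arg k y| ≤ 2 * (|x - y| / δ k) := by
    have e : arg k x - arg k y = r k / (2 * δ k) * (Real.sin (th k y) - Real.sin (th k x)) := by
      unfold arg; ring
    have e2 : th k y - th k x = Real.pi / r k * (y - x) := by unfold th; ring
    have hs : |Real.sin (th k y) - Real.sin (th k x)| ≤ |th k y - th k x| :=
      Real.abs_sin_sub_sin_le _ _
    rw [e2, abs_mul (Real.pi / r k), abs_of_pos (by positivity : 0 < Real.pi / r k),
      abs_sub_comm y x] at hs
    rw [e, abs_mul, abs_of_pos (by positivity : 0 < r k / (2 * δ k))]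
    calc r k / (2 * δ k) * |Real.sin (th k y) - Real.sin (th k x)|
        ≤ r k / (2 * δ k) * (4 / r k * |x - y|) := by
          gcongr
          exact hs.trans (by gcongr)
      _ = _ := by field_simp; norm_num
  have hc : |Real.cos (th k x) - Real.cos (th k y)| ≤ |th k x - th k y| :=
    Real.abs_cos_sub_cos_le _ _
  have ht := tau_lip (arg k x) (arg k y)
  have e : φ' k x - φ' k y = -(Real.pi / (2 * δ k)) *
      ((tau (arg k x) - tau (arg k y)) * Real.cos (th k x)
        + tau (arg k y) * (Real.cos (th k x) - Real.cos (th k y))) := by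
    unfold φ'; ring
  rw [e, abs_mul, abs_neg, abs_of_pos (by positivity : 0 < Real.pi / (2 * δ k))]
  have hZ : 0 ≤ |x - y| / δ k := by positivity
  calc Real.pi / (2 * δ k) * |(tau (arg k x) - tau (arg k y)) * Real.cos (th k x)
        + tau (arg k y) * (Real.cos (th k x) - Real.cos (th k y))|
      ≤ 4 / (2 * δ k) * ((16 * (2 * (|x - y| / δ k))) * 1 + 2 * (4 * (|x - y| / δ k))) := by
        gcongr
        refine (abs_add_le _ _).trans ?_
        rw [abs_mul, abs_mul]
        gcongr
        · exact ht.trans (by gcongr)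
        · exact Real.abs_cos_le_one _
        · exact abs_tau_le _
        · exact hc.trans hth
    _ = _ := by ring

lemma holder_φ' (k : ℕ) (x y α : ℝ) (h0 : 0 ≤ α) (h1 : α ≤ 1) :
    |φ' k x - φ' k y| ≤ 80 * (1 / δ k) ^ (1 + α) * |x - y| ^ α := by
  have hd := δ_pos k
  have e : 80 * (1 / δ k) ^ (1 + α) * |x - y| ^ α = 80 * (1 / δ k) * (|x - y| / δ k) ^ α := by
    rw [Real.rpow_add (by positivity), Real.rpow_one, div_eq_mul_one_div |x - y| (δ k),
      Real.mul_rpow (by positivity) (by positivity)]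
    ring
  rw [e]
  have hZ : 0 ≤ |x - y| / δ k := by positivity
  rcases le_total (|x - y| / δ k) 1 with h | h
  · refine (lip_φ' k x y).trans ?_
    gcongr
    exact Real.self_le_rpow_of_le_one hZ h h1
  · have h2 : 1 ≤ (|x - y| / δ k) ^ α := Real.one_le_rpow h h0
    have h3 : 0 < 1 / δ k := by positivity
    have := abs_sub (φ' k x) (φ' k y)
    have h4 := abs_φ'_le k x
    have h5 := abs_φ'_le k y
    nlinarith

lemma summable_main (α : ℝ) (h0 : 0 ≤ α) (h1 : α < 1) :
    Summable fun k : ℕ => ((4:ℝ) ^ (k+1))⁻¹ * (1 / δ k) ^ (1 + α) := by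
  set β := 1 - α with hβ
  have hβ0 : 0 < β := by linarith
  have hgeo : Summable fun k : ℕ => (2:ℝ) ^ (18 / β + 2) * ((2:ℝ) ^ (-(β/2))) ^ k := by
    refine Summable.mul_left _ (summable_geometric_of_lt_one (by positivity) ?_)
    exact Real.rpow_lt_one_of_one_lt_of_neg (by norm_num) (by linarith)
  refine Summable.of_nonneg_of_le (fun k => ?_) (fun k => ?_) hgeo
  · have := δ_pos k
    positivity
  · have e1 : 1 / δ k = (2:ℝ) ^ (q k : ℝ) := by
      rw [Real.rpow_natCast]; unfold δ; simp
    have e2 : ((4:ℝ) ^ (k+1))⁻¹ = (2:ℝ) ^ (-(2 * ((k:ℝ)+1))) := by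
      rw [Real.rpow_neg (by norm_num), Real.rpow_mul (by norm_num)]
      norm_num
      exact_mod_cast (Real.rpow_natCast (4:ℝ) (k+1)).symm
    rw [e1, e2, ← Real.rpow_mul (by norm_num), ← Real.rpow_add (by norm_num),
      ← Real.rpow_natCast, ← Real.rpow_mul (by norm_num), ← Real.rpow_add (by norm_num)]
    apply Real.rpow_le_rpow_of_exponent_le (by norm_num)
    have hq : (q k : ℝ) ≤ k + 3 * (Nat.sqrt k : ℝ) + 2 := by exact_mod_cast q_le k
    have hs : (Nat.sqrt k : ℝ)^2 ≤ k := by exact_mod_cast Nat.sqrt_le' k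
    set s : ℝ := (Nat.sqrt k : ℝ)
    have hs0 : 0 ≤ s := by positivity
    have hα : α = 1 - β := by linarith
    have key : 6 * s ≤ β / 2 * s^2 + 18 / β := by
      have : β / 2 * s^2 + 18 / β - 6 * s = (β * s - 6)^2 / (2 * β) := by
        field_simp; ring
      have : 0 ≤ (β * s - 6)^2 / (2 * β) := by positivity
      linarith
    have h3 : (q k : ℝ) * (1 + α) ≤ (k + 3 * s + 2) * (1 + α) := by gcongr
    have h4 : β / 2 * s^2 ≤ β / 2 * k := by gcongr
    have h5 : 0 ≤ β * s := by positivity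
    rw [hα] at h3 ⊢
    nlinarith

def g (x : ℝ) : ℝ := ∑' k : ℕ, ((4:ℝ) ^ (k+1))⁻¹ * φ k x
def g' (x : ℝ) : ℝ := ∑' k : ℕ, ((4:ℝ) ^ (k+1))⁻¹ * φ' k x

lemma hasSum_four : HasSum (fun k : ℕ => ((4:ℝ) ^ (k+1))⁻¹) (1/3) := by
  have := (hasSum_geometric_of_lt_one (r := (1/4:ℝ)) (by norm_num) (by norm_num)).mul_left (1/4)
  have e : (fun k : ℕ => ((4:ℝ) ^ (k+1))⁻¹) = fun k : ℕ => 1/4 * (1/4:ℝ) ^ k := by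
    funext k; rw [pow_succ]; simp [mul_comm]
  have e2 : (1/4 * (1 - 1/4)⁻¹ : ℝ) = 1/3 := by norm_num
  rw [e2] at this
  rw [e]
  exact this

lemma summable_φ (x : ℝ) : Summable fun k : ℕ => ((4:ℝ) ^ (k+1))⁻¹ * φ k x := by
  refine Summable.of_nonneg_of_le (fun k => ?_) (fun k => ?_) hasSum_four.summable
  · have := (T_mem (arg k x)).1
    unfold φ; positivity
  · exact mul_le_of_le_one_right (by positivity) (T_mem (arg k x)).2

lemma g_mem (x : ℝ) : 0 ≤ g x ∧ g x ≤ 1/3 := by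
  constructor
  · refine tsum_nonneg fun k => ?_
    have := (T_mem (arg k x)).1
    unfold φ; positivity
  · rw [← hasSum_four.tsum_eq]
    refine (summable_φ x).tsum_le_tsum (fun k => ?_) hasSum_four.summable
    exact mul_le_of_le_one_right (by positivity) (T_mem (arg k x)).2

lemma bound_φ' (k : ℕ) (x : ℝ) : ‖((4:ℝ) ^ (k+1))⁻¹ * φ' k x‖ ≤
    4 * (((4:ℝ) ^ (k+1))⁻¹ * (1 / δ k) ^ (1 + (0:ℝ))) := by
  rw [norm_mul, Real.norm_eq_abs, Real.norm_eq_abs, abs_of_pos (by positivity), add_zero,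
    Real.rpow_one]
  calc _ ≤ ((4:ℝ) ^ (k+1))⁻¹ * (4 * (1 / δ k)) := by
        gcongr
        exact abs_φ'_le k x
    _ = _ := by ring

lemma hasDerivAt_g (x : ℝ) : HasDerivAt g (g' x) x :=
  hasDerivAt_tsum ((summable_main 0 le_rfl one_pos).mul_left 4)
    (fun k y => (hasDerivAt_φ k y).const_mul _) bound_φ' (summable_φ 0) x

lemma summable_φ' (x : ℝ) : Summable fun k : ℕ => ((4:ℝ) ^ (k+1))⁻¹ * φ' k x :=
  Summable.of_norm_bounded ((summable_main 0 le_rfl one_pos).mul_left 4) (fun k => bound_φ' k x)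

lemma holder_g' (α : ℝ) (h0 : 0 ≤ α) (h1 : α < 1) :
    ∃ C : ℝ, 0 ≤ C ∧ ∀ x y, |g' x - g' y| ≤ C * |x - y| ^ α := by
  have hs := summable_main α h0 h1
  refine ⟨80 * ∑' k : ℕ, ((4:ℝ) ^ (k+1))⁻¹ * (1 / δ k) ^ (1 + α), ?_, fun x y => ?_⟩
  · refine mul_nonneg (by norm_num) (tsum_nonneg fun k => ?_)
    have := δ_pos k
    positivity
  · unfold g'
    rw [← (summable_φ' x).tsum_sub (summable_φ' y), ← Real.norm_eq_abs]
    have := tsum_of_norm_bounded (hs.hasSum.mul_left (80 * |x - y| ^ α))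
      (f := fun k => ((4:ℝ) ^ (k+1))⁻¹ * φ' k x - ((4:ℝ) ^ (k+1))⁻¹ * φ' k y) (fun k => ?_)
    · refine this.trans (le_of_eq ?_)
      ring
    · rw [← mul_sub, norm_mul, Real.norm_eq_abs, Real.norm_eq_abs, abs_of_pos (by positivity)]
      calc _ ≤ ((4:ℝ) ^ (k+1))⁻¹ * (80 * (1 / δ k) ^ (1 + α) * |x - y| ^ α) := by
            gcongr
            exact holder_φ' k x y α h0 h1.le
        _ = _ := by ring

/-- Cantor points -/
def X (a : ℕ → ℕ) : ℝ := ∑' k, (a k : ℝ) * r k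

lemma summable_X (a : ℕ → ℕ) (ha : ∀ k, a k ≤ 1) : Summable fun k => (a k : ℝ) * r k := by
  refine Summable.of_nonneg_of_le (fun k => ?_) (fun k => ?_) summable_r
  · have := r_pos k
    positivity
  · exact mul_le_of_le_one_left (r_pos k).le (by exact_mod_cast ha k)

lemma tail (a : ℕ → ℕ) (ha : ∀ k, a k ≤ 1) (n : ℕ) :
    0 ≤ ∑' j, (a (j + (n+1)) : ℝ) * r (j + (n+1)) ∧
    ∑' j, (a (j + (n+1)) : ℝ) * r (j + (n+1)) ≤ r n - δ n := by
  have h0 : ∀ j, 0 ≤ (a (j + (n+1)) : ℝ) * r (j + (n+1)) := fun j => by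
    have := r_pos (j + (n+1))
    positivity
  refine ⟨tsum_nonneg h0, Real.tsum_le_of_sum_range_le h0 fun m => ?_⟩
  refine (Finset.sum_le_sum fun j _ => ?_).trans (partial_sum' n m)
  exact mul_le_of_le_one_left (r_pos _).le (by exact_mod_cast ha _)

lemma X_eq (a : ℕ → ℕ) (ha : ∀ k, a k ≤ 1) (n : ℕ) :
    ∃ m : ℕ, ∃ w : ℝ, 0 ≤ w ∧ w ≤ r n - δ n ∧ X a = 2 * r n * m + a n * r n + w := by
  have h := (summable_X a ha).sum_add_tsum_nat_add (n+1)
  have hm : ∃ m : ℕ, ∑ j ∈ Finset.range n, (a j : ℝ) * r j = 2 * r n * m := by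
    refine ⟨∑ j ∈ Finset.range n, a j * 2 ^ (p n - p j - 1), ?_⟩
    push_cast
    rw [Finset.mul_sum]
    refine Finset.sum_congr rfl fun j hj => ?_
    have hlt := p_lt (Finset.mem_range.mp hj)
    have : r j = 2 * r n * 2 ^ (p n - p j - 1) := by
      unfold r
      obtain ⟨d, hd⟩ := Nat.exists_eq_add_of_lt hlt
      rw [hd, show p j + d + 1 - p j - 1 = d by omega, pow_add, pow_add, pow_one]
      have : (1/2:ℝ)^d * 2^d = 1 := by rw [← mul_pow]; norm_num
      linear_combination (-(1/2:ℝ)^p j) * this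
    rw [this]; ring
  obtain ⟨m, hm⟩ := hm
  obtain ⟨t0, t1⟩ := tail a ha n
  refine ⟨m, _, t0, t1, ?_⟩
  rw [← hm]
  rw [Finset.sum_range_succ] at h
  exact h.symm

lemma X_mem (a : ℕ → ℕ) (ha : ∀ k, a k ≤ 1) : 0 ≤ X a ∧ X a ≤ 1 := by
  have h := (summable_X a ha).sum_add_tsum_nat_add 1
  obtain ⟨t0, t1⟩ := tail a ha 0
  simp only [zero_add] at t0 t1
  rw [Finset.sum_range_one] at h
  have hr : r 0 = 1/2 := by simp [r, p]
  have hd := δ_pos 0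
  have h1 : (a 0 : ℝ) ≤ 1 := by exact_mod_cast ha 0
  have h2 : (0:ℝ) ≤ a 0 := by positivity
  have h' : X a = _ := h.symm
  rw [h']
  rw [hr] at t1 ⊢
  constructor <;> linarith

lemma sin_ge {k : ℕ} {w : ℝ} (h0 : 0 ≤ w) (h1 : w ≤ r k - δ k) :
    δ k / r k ≤ Real.sin (Real.pi / r k * (w + δ k / 2)) := by
  have hr := r_pos k
  have hd := δ_pos k
  have hdr := δ_le_r k
  have hp := Real.pi_pos
  have aux : ∀ v, δ k / 2 ≤ v → v ≤ r k / 2 → δ k / r k ≤ Real.sin (Real.pi / r k * v) := by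
    intro v hv1 hv2
    have h := Real.mul_le_sin (x := Real.pi / r k * v) (by
        have : 0 ≤ v := by linarith
        positivity) (by
        calc Real.pi / r k * v ≤ Real.pi / r k * (r k / 2) := by gcongr
          _ = _ := by field_simp)
    refine le_trans ?_ h
    have : 2 / Real.pi * (Real.pi / r k * v) = 2 * v / r k := by field_simp
    rw [this]
    gcongr
    linarith
  rcases le_total (w + δ k / 2) (r k / 2) with h | h
  · exact aux _ (by linarith) h
  · have := aux (r k - (w + δ k / 2)) (by linarith) (by linarith)
    have e : Real.pi / r k * (r k - (w + δ k / 2)) = Real.pi - Real.pi / r k * (w + δ k / 2) := by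
      field_simp
    rwa [e, Real.sin_pi_sub] at this

lemma φ_X (a : ℕ → ℕ) (ha : ∀ k, a k ≤ 1) (n : ℕ) :
    φ n (X a) = a n ∧ φ' n (X a) = 0 := by
  obtain ⟨m, w, w0, w1, hX⟩ := X_eq a ha n
  have hr := r_pos n
  have hd := δ_pos n
  have hs := sin_ge w0 w1
  have e : th n (X a) = Real.pi / r n * (w + δ n / 2) + a n * Real.pi + m * (2 * Real.pi) := by
    unfold th; rw [hX]; field_simp; ring
  have hmul : r n / (2 * δ n) * (δ n / r n) = 1/2 := by field_simp
  have hpos : 0 < r n / (2 * δ n) := by positivity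
  have hs2 := mul_le_mul_of_nonneg_left hs hpos.le
  rw [hmul] at hs2
  have han : a n = 0 ∨ a n = 1 := by have := ha n; omega
  unfold φ φ'
  rcases han with h | h
  · have : arg n (X a) ≤ 0 := by
      unfold arg
      rw [e, Real.sin_add_nat_mul_two_pi, h]
      simp only [Nat.cast_zero, zero_mul, add_zero]
      linarith
    rw [T_of_nonpos this, tau_of_nonpos this, h]; simp
  · have : 1 ≤ arg n (X a) := by
      unfold arg
      rw [e, Real.sin_add_nat_mul_two_pi, h]
      simp only [Nat.cast_one, one_mul, Real.sin_add_pi]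
      linarith
    rw [T_of_one_le this, tau_of_one_le this, h]; simp

lemma g_X (a : ℕ → ℕ) (ha : ∀ k, a k ≤ 1) :
    HasSum (fun k => ((4:ℝ) ^ (k+1))⁻¹ * a k) (g (X a)) ∧ g' (X a) = 0 := by
  constructor
  · have := (summable_φ (X a)).hasSum
    have e : (fun k : ℕ => ((4:ℝ) ^ (k+1))⁻¹ * φ k (X a)) = fun k => ((4:ℝ) ^ (k+1))⁻¹ * a k := by
      funext k; rw [(φ_X a ha k).1]
    have h2 : g (X a) = ∑' k : ℕ, ((4:ℝ) ^ (k+1))⁻¹ * φ k (X a) := rfl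
    rw [h2]
    rw [e] at this ⊢
    exact this
  · unfold g'
    simp [(φ_X a ha _).2]

lemma exists_rep {t : ℝ} (ht : t ∈ Ico (0:ℝ) 1) :
    ∃ x ∈ Icc (0:ℝ) 1, ∃ y ∈ Icc (0:ℝ) 1, g' x = 0 ∧ g' y = 0 ∧ g x + 2 * g y = t := by
  have h := Real.hasSum_ofDigitsTerm_digits t (b := 4) (by norm_num) ht
  set d := Real.digits t 4
  have ha : ∀ k, (fun k => (d k : ℕ) % 2) k ≤ 1 := fun k => by simp only; omega
  have hb : ∀ k, (fun k => (d k : ℕ) / 2) k ≤ 1 := fun k => by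
    have := (d k).2
    simp only; omega
  refine ⟨X _, X_mem _ ha, X _, X_mem _ hb, (g_X _ ha).2, (g_X _ hb).2, ?_⟩
  refine HasSum.unique ((g_X _ ha).1.add ((g_X _ hb).1.mul_left 2)) ?_
  convert h using 1
  ext k
  have : ((d k : ℕ) : ℝ) = ((d k : ℕ) % 2 : ℕ) + 2 * ((d k : ℕ) / 2 : ℕ) := by
    exact_mod_cast (Nat.mod_add_div (d k : ℕ) 2).symm
  unfold Real.ofDigitsTerm
  rw [this]
  push_cast
  ring

abbrev E := EuclideanSpace ℝ (Fin 2)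

def F (x : E) : ℝ := g (x 0) + 2 * g (x 1)

abbrev pr (i : Fin 2) : E →L[ℝ] ℝ := EuclideanSpace.proj i

def F' (x : E) : E →L[ℝ] ℝ := g' (x 0) • pr 0 + (2 * g' (x 1)) • pr 1

lemma hasFDerivAt_F (x : E) : HasFDerivAt F (F' x) x := by
  have h (i : Fin 2) : HasFDerivAt (fun x : E => g (x i)) (g' (x i) • pr i) x :=
    HasDerivAt.comp_hasFDerivAt (h₂ := g) (f := fun x : E => x i) x (hasDerivAt_g (x i)) (pr i).hasFDerivAt
  have := (h 0).add ((h 1).const_mul 2)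
  refine this.congr_fderiv ?_
  unfold F'
  rw [smul_smul]

lemma uniqueDiff : UniqueDiffOn ℝ unitSquare := by
  apply uniqueDiffOn_convex
  · intro x hx y hy a b ha hb hab i
    exact (convex_Icc (0:ℝ) 1) (hx i) (hy i) ha hb hab
  · refine ⟨WithLp.toLp 2 (fun _ => (1/2:ℝ)), ?_⟩
    rw [mem_interior]
    refine ⟨{x : E | ∀ i, x i ∈ Ioo (0:ℝ) 1}, fun x hx i => Ioo_subset_Icc_self (hx i), ?_, ?_⟩
    · simp only [Set.ofPred_forall]
      exact isOpen_iInter_of_finite fun i => isOpen_Ioo.preimage (pr i).continuous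
    · intro i
      norm_num

lemma fderivWithin_F {x : E} (hx : x ∈ unitSquare) : fderivWithin ℝ F unitSquare x = F' x :=
  (hasFDerivAt_F x).hasFDerivWithinAt.fderivWithin (uniqueDiff x hx)

lemma holder_F' (α : ℝ) (h0 : 0 ≤ α) (h1 : α < 1) :
    ∃ C : ℝ, ∀ x y, ‖F' x - F' y‖ ≤ C * dist x y ^ α := by
  obtain ⟨C, hC, h⟩ := holder_g' α h0 h1
  refine ⟨C * ‖pr 0‖ + 2 * C * ‖pr 1‖, fun x y => ?_⟩
  have hd (i : Fin 2) : |g' (x i) - g' (y i)| ≤ C * dist x y ^ α := by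
    refine (h _ _).trans ?_
    gcongr
    have := PiLp.norm_apply_le (x - y) i
    rw [dist_eq_norm]
    simpa using this
  have e : F' x - F' y = (g' (x 0) - g' (y 0)) • pr 0 + (2 * (g' (x 1) - g' (y 1))) • pr 1 := by
    unfold F'
    module
  rw [e]
  refine (norm_add_le _ _).trans ?_
  rw [norm_smul, norm_smul, norm_mul, Real.norm_eq_abs, Real.norm_eq_abs, Real.norm_eq_abs, abs_two]
  calc _ ≤ (C * dist x y ^ α) * ‖pr 0‖ + (2 * (C * dist x y ^ α)) * ‖pr 1‖ := by
        gcongr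
        · exact hd 0
        · exact hd 1
    _ = _ := by ring

lemma continuous_g' : Continuous g' := by
  obtain ⟨C, hC, h⟩ := holder_g' (1/2) (by norm_num) (by norm_num)
  rw [continuous_iff_continuousAt]
  intro x
  rw [ContinuousAt, tendsto_iff_dist_tendsto_zero]
  have : Filter.Tendsto (fun y => C * |y - x| ^ (1/2:ℝ)) (nhds x) (nhds 0) := by
    have hc : Continuous fun y => C * |y - x| ^ (1/2:ℝ) := by
      refine continuous_const.mul (Continuous.rpow_const (by fun_prop) fun _ => Or.inr (by norm_num))
    have := hc.tendsto x
    simpa using this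
  exact squeeze_zero (fun _ => dist_nonneg) (fun y => by rw [Real.dist_eq]; exact h y x) this

lemma continuous_F' : Continuous F' := by
  have h (i : Fin 2) : Continuous fun x : E => g' (x i) :=
    continuous_g'.comp (pr i).continuous
  exact ((h 0).smul continuous_const).add ((continuous_const.mul (h 1)).smul continuous_const)

end SardAux

open SardAux

/-- There exists `f : [0,1]² → ℝ` of class `C^{1,α}` for every `α ∈ (0,1)` without the
strong Sard property; in fact `L¹(f(S)) = 1` where `S` is the critical set of `f`. -/
theorem exists_C1Holder_not_strongSard :
    ∃ f : EuclideanSpace ℝ (Fin 2) → ℝ,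
      (∀ α ∈ Set.Ioo (0:ℝ) 1, IsC1Holder f α) ∧
      volume (f '' critSet f) = 1 := by
  refine ⟨F, fun α hα => ⟨fun x _ => (hasFDerivAt_F x).differentiableAt.differentiableWithinAt,
    continuous_F'.continuousOn.congr fun x hx => fderivWithin_F hx, ?_⟩, ?_⟩
  · obtain ⟨C, h⟩ := holder_F' α hα.1.le hα.2
    refine ⟨C, fun x hx y hy => ?_⟩
    rw [fderivWithin_F hx, fderivWithin_F hy]
    exact h x y
  · apply le_antisymm
    · have : F '' critSet F ⊆ Icc (0:ℝ) 1 := by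
        rintro _ ⟨x, -, rfl⟩
        have h0 := g_mem (x 0)
        have h1 := g_mem (x 1)
        unfold F
        constructor <;> linarith [h0.1, h0.2, h1.1, h1.2]
      refine (measure_mono this).trans ?_
      simp
    · have : Ico (0:ℝ) 1 ⊆ F '' critSet F := by
        intro t ht
        obtain ⟨x, hx, y, hy, gx, gy, h⟩ := exists_rep ht
        have hz : (!₂[x, y] : E) ∈ unitSquare := by
          intro i
          fin_cases i
          · exact hx
          · exact hy
        refine ⟨!₂[x, y], ⟨hz, Or.inr ?_⟩, ?_⟩
        · rw [fderivWithin_F hz]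
          simp [F', gx, gy]
        · simpa [F] using h
      refine le_trans ?_ (measure_mono this)
      simp
end
end

section
/- There exists a function f : [0,1] → ℝ, Hölder continuous of every exponent α ∈ (0,1), such that L¹(f(S)) = 1 while the pushforward measure f_#(𝟙_S L¹) is concentrated on the rational numbers (so that f_#(𝟙_S L¹) ⊥ L¹), where S is the critical set of f. -/
open MeasureTheory Set

noncomputable section

/-- The critical set of `f : [0,1] → ℝ`: points of `[0,1]` where `f` is either not
differentiable or has zero derivative. -/
def critSet1 (f : ℝ → ℝ) : Set ℝ :=
  {x | x ∈ Set.Icc (0:ℝ) 1 ∧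
    (¬ DifferentiableWithinAt ℝ f (Set.Icc (0:ℝ) 1) x ∨
      derivWithin f (Set.Icc (0:ℝ) 1) x = 0)}

/-- `f` is Hölder continuous of exponent `α` on `[0,1]`. -/
def HolderOnUnit (f : ℝ → ℝ) (α : ℝ) : Prop :=
  ∃ C : ℝ, ∀ x ∈ Set.Icc (0:ℝ) 1, ∀ y ∈ Set.Icc (0:ℝ) 1, |f x - f y| ≤ C * |x - y| ^ α

open Filter Topology ProbabilityTheory

/-- weights -/
def wP (n : ℕ) : ℝ := 1 / (((n:ℝ) + 1) * (n + 2))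

lemma wP_pos (n : ℕ) : 0 < wP n := by unfold wP; positivity

lemma wP_le_one (n : ℕ) : wP n ≤ 1 := by
  unfold wP
  rw [div_le_one (by positivity)]
  have : (0:ℝ) ≤ n := n.cast_nonneg
  nlinarith

lemma wP_hasSum : HasSum wP 1 := by
  rw [hasSum_iff_tendsto_nat_of_nonneg (fun n => (wP_pos n).le)]
  have h : ∀ n : ℕ, ∑ i ∈ Finset.range n, wP i = 1 - 1 / ((n:ℝ) + 1) := by
    intro n
    induction n with
    | zero => simp
    | succ k ih =>
      rw [Finset.sum_range_succ, ih]
      unfold wP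
      push_cast
      have : (k:ℝ) + 1 ≠ 0 := by positivity
      have : (k:ℝ) + 2 ≠ 0 := by positivity
      have : (k:ℝ) + 1 + 1 ≠ 0 := by positivity
      field_simp
      ring
  simp_rw [h]
  simpa using (tendsto_one_div_add_atTop_nhds_zero_nat (𝕜 := ℝ)).const_sub 1

/-- uniform measure on the dyadic grid of level `n`, unnormalized -/
def gridM (n : ℕ) : Measure ℝ :=
  ∑ k ∈ Finset.range (2 ^ n), Measure.dirac (((k:ℝ) + 1) / 2 ^ n)

lemma gridM_univ (n : ℕ) : gridM n univ = 2 ^ n := by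
  simp [gridM]

/-- the atomic measure -/
def atomM : Measure ℝ := Measure.sum fun n => ENNReal.ofReal (wP n / 2 ^ n) • gridM n

instance : IsProbabilityMeasure atomM := by
  constructor
  rw [atomM, Measure.sum_apply _ MeasurableSet.univ]
  have : ∀ n, (ENNReal.ofReal (wP n / 2 ^ n) • gridM n) univ = ENNReal.ofReal (wP n) := by
    intro n
    rw [Measure.smul_apply, gridM_univ, smul_eq_mul]
    have : (2:ENNReal) ^ n = ENNReal.ofReal (2 ^ n) := by
      rw [ENNReal.ofReal_pow (by norm_num)]; simp
    rw [this, ← ENNReal.ofReal_mul (by have := wP_pos n; positivity)]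
    congr 1
    field_simp
  simp_rw [this]
  rw [← ENNReal.ofReal_tsum_of_nonneg (fun n => (wP_pos n).le) wP_hasSum.summable,
    wP_hasSum.tsum_eq, ENNReal.ofReal_one]

lemma atomM_null {s : Set ℝ} (hs : MeasurableSet s)
    (h : ∀ n k : ℕ, k < 2 ^ n → ((k:ℝ) + 1) / 2 ^ n ∉ s) : atomM s = 0 := by
  rw [atomM, Measure.sum_apply _ hs]
  simp only [ENNReal.tsum_eq_zero]
  intro n
  rw [Measure.smul_apply, gridM, Measure.finsetSum_apply, Finset.sum_eq_zero, smul_zero]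
  intro k hk
  rw [Measure.dirac_apply' _ hs]
  simp [h n k (Finset.mem_range.1 hk)]

lemma atomM_ge {s : Set ℝ} (hs : MeasurableSet s) (n k : ℕ) (hk : k < 2 ^ n)
    (h : ((k:ℝ) + 1) / 2 ^ n ∈ s) : ENNReal.ofReal (wP n / 2 ^ n) ≤ atomM s := by
  rw [atomM, Measure.sum_apply _ hs]
  refine le_trans ?_ (ENNReal.le_tsum n)
  rw [Measure.smul_apply, gridM, Measure.finsetSum_apply, smul_eq_mul]
  conv_lhs => rw [← mul_one (ENNReal.ofReal _)]
  gcongr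
  refine le_trans ?_ (Finset.single_le_sum (fun i _ => zero_le) (Finset.mem_range.2 hk))
  rw [Measure.dirac_apply' _ hs]
  simp [h]

/-- its distribution function -/
def cG : ℝ → ℝ := fun y => cdf atomM y

lemma cG_mono : Monotone cG := (cdf atomM).mono

lemma cG_nonneg (y : ℝ) : 0 ≤ cG y := cdf_nonneg _ _
lemma cG_le_one (y : ℝ) : cG y ≤ 1 := cdf_le_one _ _

lemma cG_sub {a z : ℝ} (ha : 0 ≤ a) (hz : z ≤ 1) (n : ℕ) (h : (1/2:ℝ) ^ n ≤ z - a) :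
    wP n / 2 ^ n ≤ cG z - cG a := by
  have h2 : (0:ℝ) < 2 ^ n := by positivity
  have h12 : (1/2:ℝ) ^ n = 1 / 2 ^ n := by rw [div_pow, one_pow]
  rw [h12, div_le_iff₀ h2] at h
  have hm : atomM (Ioc a z) = ENNReal.ofReal (cG z - cG a) := by
    conv_lhs => rw [← measure_cdf atomM]
    rw [StieltjesFunction.measure_Ioc]
    rfl
  have haz : a ≤ z := by
    by_contra hc
    nlinarith
  rw [← ENNReal.ofReal_le_ofReal_iff (sub_nonneg.2 (cG_mono haz)), ← hm]
  have hf1 := Nat.floor_le (mul_nonneg ha h2.le)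
  have hf2 := Nat.lt_floor_add_one (a * 2 ^ n)
  refine atomM_ge measurableSet_Ioc n ⌊a * 2 ^ n⌋₊ ?_ ⟨?_, ?_⟩
  · have : ((⌊a * 2 ^ n⌋₊ : ℕ) : ℝ) < ((2 ^ n : ℕ) : ℝ) := by
      push_cast
      nlinarith
    exact_mod_cast this
  · rw [lt_div_iff₀ h2]; exact hf2
  · rw [div_le_iff₀ h2]; nlinarith

lemma exists_scale {h : ℝ} (h0 : 0 < h) (h1 : h ≤ 1) :
    ∃ n : ℕ, (1/2:ℝ) ^ n ≤ h ∧ h ≤ 2 * (1/2:ℝ) ^ n := by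
  obtain ⟨n, hn1, hn2⟩ := exists_nat_pow_near_of_lt_one h0 h1 (by norm_num : (0:ℝ) < 1/2)
    (by norm_num)
  refine ⟨n + 1, hn1.le, ?_⟩
  rw [pow_succ]; linarith

lemma exists_decay_bound {α : ℝ} (h0 : 0 < α) (h1 : α < 1) :
    ∃ C : ℝ, 0 ≤ C ∧ ∀ n : ℕ, 2 * (1/2:ℝ) ^ n ≤ C * (wP n / 2 ^ n) ^ α := by
  set r : ℝ := (1/2:ℝ) ^ (1 - α) with hr
  have hr0 : 0 < r := by positivity
  have hr1 : r < 1 := Real.rpow_lt_one (by norm_num) (by norm_num) (by linarith)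
  obtain ⟨M, hM⟩ := (tendsto_pow_const_mul_const_pow_of_abs_lt_one 2
    (by rwa [abs_of_pos hr0] : |r| < 1)).bddAbove_range
  have hM' : ∀ n : ℕ, (n:ℝ) ^ 2 * r ^ n ≤ M := fun n => hM ⟨n, rfl⟩
  have hM0 : 0 ≤ M := by simpa using hM' 0
  refine ⟨2 * (M / r ^ 2), by positivity, fun n => ?_⟩
  have e1 : (wP n / 2 ^ n) ^ α = wP n ^ α * ((1/2:ℝ) ^ n) ^ α := by
    rw [← Real.mul_rpow (wP_pos n).le (by positivity), div_pow, one_pow]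
    congr 1; ring
  have e2 : wP n ≤ wP n ^ α := by
    conv_lhs => rw [← Real.rpow_one (wP n)]
    exact Real.rpow_le_rpow_of_exponent_ge (wP_pos n) (wP_le_one n) h1.le
  have e3 : (1/2:ℝ) ^ n = ((1/2:ℝ) ^ n) ^ α * r ^ n := by
    have : r ^ n = ((1/2:ℝ) ^ n) ^ (1 - α) := by
      rw [hr, ← Real.rpow_natCast, ← Real.rpow_natCast, ← Real.rpow_mul (by norm_num),
        ← Real.rpow_mul (by norm_num), mul_comm]
    rw [this, ← Real.rpow_add (by positivity)]
    simp
  have e4 : r ^ n ≤ M / r ^ 2 * wP n := by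
    have := hM' (n + 2)
    unfold wP
    rw [div_mul_div_comm, le_div_iff₀ (by positivity)]
    push_cast at this
    rw [pow_add] at this
    have hp : 0 < r ^ n * r ^ 2 := by positivity
    have hn : (0:ℝ) ≤ n := n.cast_nonneg
    have h3 : ((n:ℝ) + 1) * (n + 2) ≤ (n + 2) ^ 2 := by nlinarith
    nlinarith [mul_le_mul_of_nonneg_right h3 hp.le]
  rw [e1]
  have hA : 0 < ((1/2:ℝ) ^ n) ^ α := by positivity
  have hQ : 0 ≤ M / r ^ 2 := by positivity
  calc 2 * (1/2:ℝ) ^ n = 2 * (((1/2:ℝ) ^ n) ^ α * r ^ n) := by rw [← e3]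
    _ ≤ 2 * (((1/2:ℝ) ^ n) ^ α * (M / r ^ 2 * wP n ^ α)) := by
      gcongr
      exact e4.trans (mul_le_mul_of_nonneg_left e2 hQ)
    _ = _ := by ring

lemma key_bound {α : ℝ} (h0 : 0 < α) (h1 : α < 1) :
    ∃ C : ℝ, 0 ≤ C ∧ ∀ a z : ℝ, 0 ≤ a → a < z → z ≤ 1 → z - a ≤ C * (cG z - cG a) ^ α := by
  obtain ⟨C, hC, h⟩ := exists_decay_bound h0 h1
  refine ⟨C, hC, fun a z ha haz hz => ?_⟩
  obtain ⟨n, hn1, hn2⟩ := exists_scale (sub_pos.2 haz) (by linarith)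
  refine hn2.trans ((h n).trans ?_)
  have := cG_sub ha hz n hn1
  have hw := wP_pos n
  gcongr

lemma cG_strict {a z : ℝ} (ha : 0 ≤ a) (haz : a < z) (hz : z ≤ 1) : cG a < cG z := by
  obtain ⟨n, hn1, hn2⟩ := exists_scale (sub_pos.2 haz) (by linarith)
  have := cG_sub ha hz n hn1
  have hw := wP_pos n
  have : 0 < wP n / 2 ^ n := by positivity
  linarith

/-- the candidate set for the quantile -/
def qSet (x : ℝ) : Set ℝ := {y | y ∈ Icc (0:ℝ) 1 ∧ (x ≤ cG y ∨ 1 ≤ y)}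

/-- quantile function -/
def qF (x : ℝ) : ℝ := sInf (qSet x)

lemma qSet_ne (x : ℝ) : (qSet x).Nonempty := ⟨1, by simp [qSet]⟩
lemma qSet_bdd (x : ℝ) : BddBelow (qSet x) := ⟨0, fun _ hy => hy.1.1⟩

lemma qF_nonneg (x : ℝ) : 0 ≤ qF x := le_csInf (qSet_ne x) fun _ hy => hy.1.1
lemma qF_le_one (x : ℝ) : qF x ≤ 1 := csInf_le (qSet_bdd x) (by simp [qSet])

lemma qF_mono : Monotone qF := by
  intro x y hxy
  exact csInf_le_csInf (qSet_bdd x) (qSet_ne y)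
    (fun z hz => ⟨hz.1, hz.2.imp (fun h => hxy.trans h) id⟩)

lemma qF_le_iff {x y : ℝ} (h0 : 0 ≤ y) (h1 : y < 1) : qF x ≤ y ↔ x ≤ cG y := by
  constructor
  · intro h
    have hc : Tendsto cG (𝓝[>] y) (𝓝 (cG y)) :=
      ((cdf atomM).right_continuous y).mono_left (nhdsWithin_mono _ Ioi_subset_Ici_self)
    refine ge_of_tendsto hc ?_
    filter_upwards [Ioo_mem_nhdsGT h1] with z hz
    obtain ⟨w, hw, hwz⟩ := exists_lt_of_csInf_lt (qSet_ne x) (lt_of_le_of_lt h hz.1)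
    rcases hw.2 with h' | h'
    · exact h'.trans (cG_mono hwz.le)
    · linarith [hz.2]
  · intro h
    exact csInf_le (qSet_bdd x) ⟨⟨h0, h1.le⟩, Or.inl h⟩

lemma qF_cG {y : ℝ} (h0 : 0 < y) (h1 : y < 1) : qF (cG y) = y := by
  apply le_antisymm ((qF_le_iff h0.le h1).2 le_rfl)
  by_contra! hc
  have := (qF_le_iff (qF_nonneg _) (hc.trans h1)).1 le_rfl
  exact absurd this (not_le.2 (cG_strict (qF_nonneg _) hc h1.le))

lemma qF_holder (α : ℝ) (hα : α ∈ Set.Ioo (0:ℝ) 1) : HolderOnUnit qF α := by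
  obtain ⟨C, hC, h⟩ := key_bound hα.1 hα.2
  have main : ∀ x y : ℝ, x ≤ y → qF y - qF x ≤ C * (y - x) ^ α := by
    intro x y hxy
    rcases (qF_mono hxy).eq_or_lt with he | hlt
    · rw [he, sub_self]
      have := sub_nonneg.2 hxy
      positivity
    · have h1 : qF x < 1 := hlt.trans_le (qF_le_one y)
      have hx := (qF_le_iff (qF_nonneg x) h1).1 le_rfl
      rw [sub_le_iff_le_add]
      refine le_of_forall_lt_imp_le_of_dense fun z hz => ?_
      rcases le_or_gt z (qF x) with hzx | hzx
      · have := sub_nonneg.2 hxy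
        have : 0 ≤ C * (y - x) ^ α := by positivity
        linarith
      · have hz1 : z < 1 := hz.trans_le (qF_le_one y)
        have hy : cG z < y := by
          by_contra! hc
          exact absurd ((qF_le_iff ((qF_nonneg x).trans hzx.le) hz1).2 hc) (not_le.2 hz)
        have h2 := h (qF x) z (qF_nonneg x) hzx hz1.le
        have h3 : (cG z - cG (qF x)) ^ α ≤ (y - x) ^ α :=
          Real.rpow_le_rpow (sub_nonneg.2 (cG_mono hzx.le)) (by linarith) hα.1.le
        nlinarith [mul_le_mul_of_nonneg_left h3 hC]
  refine ⟨C, fun x _ y _ => ?_⟩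
  rcases le_total x y with hxy | hxy
  · rw [abs_sub_comm, abs_of_nonneg (sub_nonneg.2 (qF_mono hxy)), abs_sub_comm,
      abs_of_nonneg (sub_nonneg.2 hxy)]
    exact main x y hxy
  · rw [abs_of_nonneg (sub_nonneg.2 (qF_mono hxy)), abs_of_nonneg (sub_nonneg.2 hxy)]
    exact main y x hxy

lemma qF_map : Measure.map qF (volume.restrict (Icc (0:ℝ) 1)) = atomM := by
  have hm : Measurable qF := qF_mono.measurable
  refine Measure.ext_of_Iic _ _ fun y => ?_
  rw [Measure.map_apply hm measurableSet_Iic, Measure.restrict_apply (hm measurableSet_Iic)]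
  rcases lt_or_ge y 0 with hy | hy
  · have : qF ⁻¹' Iic y = ∅ := by
      ext x
      simp only [mem_preimage, mem_Iic, mem_empty_iff_false, iff_false, not_le]
      exact hy.trans_le (qF_nonneg x)
    rw [this, atomM_null measurableSet_Iic]
    · simp
    · intro n k _ h
      have : (0:ℝ) < ((k:ℝ) + 1) / 2 ^ n := by positivity
      exact absurd (mem_Iic.1 h) (by linarith)
  · rcases lt_or_ge y 1 with hy1 | hy1
    · have : qF ⁻¹' Iic y ∩ Icc 0 1 = Icc 0 (cG y) := by
        ext x
        simp only [mem_inter_iff, mem_preimage, mem_Iic, mem_Icc, qF_le_iff hy hy1]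
        have := cG_le_one y
        constructor
        · rintro ⟨h1, h2, h3⟩; exact ⟨h2, h1⟩
        · rintro ⟨h1, h2⟩; exact ⟨h2, h1, h2.trans this⟩
      rw [this, Real.volume_Icc, sub_zero, cG, ofReal_cdf]
    · have : qF ⁻¹' Iic y = univ := by
        ext x
        simp only [mem_preimage, mem_Iic, mem_univ, iff_true]
        exact (qF_le_one x).trans hy1
      rw [this]
      have h2 : atomM (Iic y)ᶜ = 0 := by
        refine atomM_null measurableSet_Iic.compl fun n k hk h => h ?_
        refine mem_Iic.2 (le_trans ?_ hy1)
        rw [div_le_one (by positivity)]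
        exact_mod_cast hk
      rw [(prob_compl_eq_zero_iff measurableSet_Iic).1 h2]
      simp

lemma measurable_ratRange : MeasurableSet (Set.range ((↑) : ℚ → ℝ)) :=
  (countable_range _).measurableSet

lemma atomM_rat : atomM (Set.range ((↑) : ℚ → ℝ))ᶜ = 0 := by
  refine atomM_null measurable_ratRange.compl fun n k _ h => h ?_
  exact ⟨((k:ℚ) + 1) / 2 ^ n, by push_cast; rfl⟩

lemma qF_push : volume (qF ⁻¹' (Set.range ((↑) : ℚ → ℝ))ᶜ ∩ Icc 0 1) = 0 := by
  have hm : Measurable qF := qF_mono.measurable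
  have := atomM_rat
  rwa [← qF_map, Measure.map_apply hm measurable_ratRange.compl,
    Measure.restrict_apply (hm measurable_ratRange.compl)] at this

lemma qF_push_crit :
    Measure.map qF (volume.restrict (critSet1 qF)) (Set.range ((↑) : ℚ → ℝ))ᶜ = 0 := by
  have hm : Measurable qF := qF_mono.measurable
  rw [Measure.map_apply hm measurable_ratRange.compl,
    Measure.restrict_apply (hm measurable_ratRange.compl)]
  exact measure_mono_null (inter_subset_inter_right _ fun x hx => hx.1) qF_push

lemma qF_image : volume (qF '' critSet1 qF) = 1 := by
  apply le_antisymm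
  · have : qF '' critSet1 qF ⊆ Icc 0 1 := by
      rintro _ ⟨x, _, rfl⟩
      exact ⟨qF_nonneg x, qF_le_one x⟩
    simpa using measure_mono (μ := volume) this
  · set N : Set ℝ := (qF ⁻¹' (Set.range ((↑) : ℚ → ℝ))ᶜ ∩ Icc 0 1) \ critSet1 qF with hN
    have hN0 : volume N = 0 := measure_mono_null sdiff_subset qF_push
    have hD : DifferentiableOn ℝ qF N := by
      intro x hx
      have h1 : x ∈ Icc (0:ℝ) 1 := hx.1.2
      have h2 : DifferentiableWithinAt ℝ qF (Icc 0 1) x := by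
        by_contra hc
        exact hx.2 ⟨h1, Or.inl hc⟩
      exact h2.mono fun y hy => hy.1.2
    have hI : volume (qF '' N) = 0 :=
      addHaar_image_eq_zero_of_differentiableOn_of_addHaar_eq_zero volume hD hN0
    have hR : volume (Set.range ((↑) : ℚ → ℝ)) = 0 := (countable_range _).measure_zero _
    have hsub : Ioo (0:ℝ) 1 ⊆ qF '' critSet1 qF ∪ (qF '' N ∪ Set.range ((↑) : ℚ → ℝ)) := by
      intro y hy
      have he := qF_cG hy.1 hy.2
      by_cases hq : y ∈ Set.range ((↑) : ℚ → ℝ)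
      · exact Or.inr (Or.inr hq)
      by_cases hS : cG y ∈ critSet1 qF
      · exact Or.inl ⟨_, hS, he⟩
      · refine Or.inr (Or.inl ⟨_, ⟨⟨?_, cG_nonneg y, cG_le_one y⟩, hS⟩, he⟩)
        rw [mem_preimage, he]
        exact hq
    calc (1:ENNReal) = volume (Ioo (0:ℝ) 1) := by simp
      _ ≤ _ := measure_mono hsub
      _ ≤ volume (qF '' critSet1 qF) + volume (qF '' N ∪ Set.range ((↑) : ℚ → ℝ)) :=
        measure_union_le _ _
      _ = volume (qF '' critSet1 qF) := by
        rw [measure_union_null hI hR, add_zero]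

/-- There exists `f : [0,1] → ℝ` Hölder continuous of every exponent `α ∈ (0,1)` such that
`L¹(f(S)) = 1` while the pushforward `f_#(𝟙_S L¹)` is concentrated on the rationals
(hence `f_#(𝟙_S L¹) ⊥ L¹`), where `S` is the critical set of `f`. -/
theorem exists_holder_image_full_but_pushforward_on_rationals :
    ∃ f : ℝ → ℝ,
      (∀ α ∈ Set.Ioo (0:ℝ) 1, HolderOnUnit f α) ∧
      volume (f '' critSet1 f) = 1 ∧
      Measure.map f (volume.restrict (critSet1 f)) (Set.range ((↑) : ℚ → ℝ))ᶜ = 0 ∧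
      (Measure.map f (volume.restrict (critSet1 f))).MutuallySingular volume := by
  refine ⟨qF, qF_holder, qF_image, qF_push_crit, (Set.range ((↑) : ℚ → ℝ))ᶜ,
    measurable_ratRange.compl, qF_push_crit, ?_⟩
  rw [compl_compl]
  exact (countable_range _).measure_zero _
end
end
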